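/- arXiv:1601.05682 — 6 statements merged into one kernel-verified Lean document; each statement's English description precedes it below -/
import Mathlib

section
/- As m → ∞ one has J₄(3,m) = 6·log m + O(1). -/
open MeasureTheory Filter Asymptotics

/-- `J₄(a,m) := ∫₀^π x^a sin⁴(mx/2)/sin⁴(x/2) dx`. -/
noncomputable def J4 (a : ℝ) (m : ℕ) : ℝ :=
  ∫ x in (0 : ℝ)..Real.pi, x ^ a * Real.sin (m * x / 2) ^ 4 / Real.sin (x / 2) ^ 4

/-!
Near `0` the weight `x³ / sin⁴(x/2)` is `16/x` up to a bounded error, and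
`16 sin⁴(mx/2) = 6 - 8 cos(mx) + 2 cos(2mx)` has mean `6`. Cut the integral at `1/m`.

* On `[0, 1/m]` the integrand is at most `π⁴ m` (`integrand_le`), so this piece is `O(1)`.
* On `[1/m, π]` the integrand is compared with the derivative of
  `H(x) = 6 log x - 8 sin(mx)/(mx) + sin(2mx)/(mx)`. The difference is at most
  `π⁵ + 9/(m x²)` (`integrand_sub_le`): the first term comes from the weight
  (`weight_sub_le`), the second from differentiating the factor `1/(mx)` in `H`. Its integral over
  `[1/m, π]` is `O(1)`, while `H(π) - H(1/m) = 6 log m + O(1)`.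
-/

lemma div_pi_le_sin_half {x : ℝ} (hx : 0 < x) (hx' : x ≤ Real.pi) :
    x / Real.pi ≤ Real.sin (x / 2) := by
  have h := Real.mul_le_sin (x := x / 2) (by linarith) (by linarith)
  calc x / Real.pi = 2 / Real.pi * (x / 2) := by ring
    _ ≤ _ := h

lemma sub_sin_le_cube {t : ℝ} (ht : 0 < t) : t - Real.sin t ≤ t ^ 3 := by
  have h1 := Real.sin_gt_sub_cube ht
  have h2 : 0 < t ^ 3 := by positivity
  linarith

lemma weight_sub_le {x : ℝ} (hx : 0 < x) (hx' : x ≤ Real.pi) :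
    |x ^ 3 / Real.sin (x / 2) ^ 4 - 16 / x| ≤ Real.pi ^ 5 := by
  have hpi := Real.pi_pos
  have h1 := div_pi_le_sin_half hx hx'
  have h2 := sub_sin_le_cube (t := x / 2) (by linarith)
  have h3 := Real.sin_le (x := x / 2) (by linarith)
  have hs : 0 < Real.sin (x / 2) := lt_of_lt_of_le (by positivity) h1
  set s := Real.sin (x / 2)
  have e : x ^ 3 / s ^ 4 - 16 / x = ((x - 2 * s) * ((x + 2 * s) * (x ^ 2 + 4 * s ^ 2))) / (x * s ^ 4) := by
    field_simp
    ring
  have hnn : 0 ≤ x - 2 * s := by linarith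
  rw [e, abs_of_nonneg (by positivity)]
  have hxs : x / s ≤ Real.pi := by
    rw [div_le_iff₀ hs]
    rw [div_le_iff₀ hpi] at h1
    linarith
  calc _ ≤ (x ^ 3 / 4 * ((x + x) * (x ^ 2 + x ^ 2))) / (x * s ^ 4) := by
        gcongr
        · nlinarith
        · linarith
        · nlinarith
    _ = x * (x / s) ^ 4 := by
        field_simp
        ring
    _ ≤ Real.pi * Real.pi ^ 4 := by gcongr
    _ = _ := by ring

lemma integrand_le (m : ℕ) {x : ℝ} (hx : 0 < x) (hx' : x ≤ Real.pi) :
    |x ^ 3 * Real.sin (m * x / 2) ^ 4 / Real.sin (x / 2) ^ 4| ≤ Real.pi ^ 4 * (m ^ 4 * x ^ 3) := by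
  have hpi := Real.pi_pos
  have h1 := div_pi_le_sin_half hx hx'
  have hs : 0 < Real.sin (x / 2) := lt_of_lt_of_le (by positivity) h1
  have h4 : |Real.sin (m * x / 2)| ≤ m * x := by
    have hm : 0 ≤ m * x := by positivity
    have := Real.abs_sin_le_abs (x := m * x / 2)
    rw [abs_of_nonneg (by positivity : 0 ≤ m * x / 2)] at this
    linarith
  have h5 : Real.sin (m * x / 2) ^ 4 ≤ (m * x) ^ 4 := by
    rw [← Even.pow_abs (by decide : Even 4) (Real.sin (m * x / 2))]
    gcongr
  rw [abs_of_nonneg (by positivity)]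
  calc _ ≤ x ^ 3 * (m * x) ^ 4 / (x / Real.pi) ^ 4 := by gcongr
    _ = _ := by field_simp

/-- The derivative of `6 log x - 8 sin(mx)/(mx) + sin(2mx)/(mx)`. -/
noncomputable def dH (m : ℕ) (x : ℝ) : ℝ :=
  6 / x - 8 * (Real.cos (m * x) / x - Real.sin (m * x) / (m * x ^ 2))
    + (2 * Real.cos (2 * (m * x)) / x - Real.sin (2 * (m * x)) / (m * x ^ 2))

lemma hasDerivAt_H {m : ℕ} (hm : 0 < m) {x : ℝ} (hx : 0 < x) :
    HasDerivAt (fun x : ℝ => 6 * Real.log x - 8 * (Real.sin (m * x) / (m * x))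
      + Real.sin (2 * (m * x)) / (m * x)) (dH m x) x := by
  have hm' : (m : ℝ) ≠ 0 := by positivity
  have hid : HasDerivAt (fun x : ℝ => m * x) (m : ℝ) x := by
    simpa using (hasDerivAt_id x).const_mul (m : ℝ)
  have hne : (m * x : ℝ) ≠ 0 := by positivity
  have h1 := (Real.hasDerivAt_log hx.ne').const_mul 6
  have h2 := ((hid.sin).div hid hne).const_mul 8
  have h3 := ((hid.const_mul 2).sin).div hid hne
  refine ((h1.sub h2).add h3).congr_deriv ?_
  unfold dH
  field_simp

lemma integrand_sub_le {m : ℕ} (hm : 0 < m) {x : ℝ} (hx : 0 < x) (hx' : x ≤ Real.pi) :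
    |x ^ 3 * Real.sin (m * x / 2) ^ 4 / Real.sin (x / 2) ^ 4 - dH m x|
      ≤ Real.pi ^ 5 + 9 / (m * x ^ 2) := by
  have hm' : (0 : ℝ) < m := by positivity
  have hw := weight_sub_le hx hx'
  have htrig : 16 * Real.sin (m * x / 2) ^ 4
      = 6 - 8 * Real.cos (m * x) + 2 * Real.cos (2 * (m * x)) := by
    have h1 : Real.cos (m * x) = 1 - 2 * Real.sin (m * x / 2) ^ 2 := by
      have := Real.cos_two_mul (m * x / 2)
      rw [Real.cos_sq', show 2 * (m * x / 2) = m * x by ring] at this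
      linarith
    rw [Real.cos_two_mul, h1]
    ring
  have e : x ^ 3 * Real.sin (m * x / 2) ^ 4 / Real.sin (x / 2) ^ 4 - dH m x
      = Real.sin (m * x / 2) ^ 4 * (x ^ 3 / Real.sin (x / 2) ^ 4 - 16 / x)
        + (Real.sin (2 * (m * x)) - 8 * Real.sin (m * x)) / (m * x ^ 2) := by
    have : Real.sin (m * x / 2) ^ 4 * (16 / x)
        = (6 - 8 * Real.cos (m * x) + 2 * Real.cos (2 * (m * x))) / x := by
      rw [← htrig]; ring
    rw [mul_sub, this]
    unfold dH
    ring
  rw [e]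
  refine (abs_add_le _ _).trans (add_le_add ?_ ?_)
  · rw [abs_mul]
    have : |Real.sin (m * x / 2) ^ 4| ≤ 1 := by
      rw [abs_pow]
      exact pow_le_one₀ (abs_nonneg _) (Real.abs_sin_le_one _)
    calc _ ≤ 1 * Real.pi ^ 5 := by gcongr
      _ = _ := one_mul _
  · rw [abs_div, abs_of_pos (by positivity : 0 < m * x ^ 2)]
    gcongr
    rw [abs_le]
    constructor <;>
    linarith [Real.sin_le_one (m * x), Real.neg_one_le_sin (m * x),
      Real.sin_le_one (2 * (m * x)), Real.neg_one_le_sin (2 * (m * x))]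

lemma integrand_intervalIntegrable (m : ℕ) : IntervalIntegrable
    (fun x : ℝ => x ^ 3 * Real.sin (m * x / 2) ^ 4 / Real.sin (x / 2) ^ 4)
    volume 0 Real.pi := by
  have hb : IntervalIntegrable (fun x : ℝ => Real.pi ^ 4 * ((m : ℝ) ^ 4 * x ^ 3))
      volume 0 Real.pi := by
    apply Continuous.intervalIntegrable
    fun_prop
  refine hb.mono_fun (Measurable.aestronglyMeasurable (by fun_prop)) ?_
  rw [Set.uIoc_of_le Real.pi_pos.le]
  filter_upwards [ae_restrict_mem measurableSet_Ioc] with x hx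
  exact (integrand_le m hx.1 hx.2).trans (le_abs_self _)

/-- `J₄(3,m) = 6 log m + O(1)` as the integer `m → ∞`. -/
theorem stmt_9 :
    (fun m : ℕ => J4 3 m - 6 * Real.log m) =O[atTop] fun _ : ℕ => (1 : ℝ) := by
  have hpi := Real.pi_pos
  refine IsBigO.of_bound (Real.pi ^ 4 + (Real.pi ^ 6 + 9)
    + |6 * Real.log Real.pi + 8 * Real.sin 1 - Real.sin 2|) ?_
  filter_upwards [eventually_ge_atTop 1] with m hm
  have hm' : (0 : ℝ) < m := by positivity
  have hm1 : (1 : ℝ) ≤ m := by exact_mod_cast hm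
  set f : ℝ → ℝ := fun x => x ^ 3 * Real.sin (m * x / 2) ^ 4 / Real.sin (x / 2) ^ 4 with hf
  set c : ℝ := 1 / m with hc
  have hc0 : 0 < c := by positivity
  have hcpi : c ≤ Real.pi := by
    have : c ≤ 1 := by rw [hc, div_le_one hm']; exact hm1
    linarith [Real.pi_gt_three]
  have hJ : J4 3 m = ∫ x in (0 : ℝ)..Real.pi, f x := by
    unfold J4
    simp only [hf, Real.rpow_ofNat]
  have hfi : IntervalIntegrable f volume 0 Real.pi := integrand_intervalIntegrable m
  have hcmem : c ∈ Set.uIcc 0 Real.pi := by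
    rw [Set.uIcc_of_le hpi.le]; exact ⟨hc0.le, hcpi⟩
  have hf1 : IntervalIntegrable f volume 0 c :=
    hfi.mono_set (Set.uIcc_subset_uIcc Set.left_mem_uIcc hcmem)
  have hf2 : IntervalIntegrable f volume c Real.pi :=
    hfi.mono_set (Set.uIcc_subset_uIcc hcmem Set.right_mem_uIcc)
  have hpos : ∀ x ∈ Set.uIcc c Real.pi, 0 < x := by
    intro x hx
    rw [Set.uIcc_of_le hcpi] at hx
    exact hc0.trans_le hx.1
  have hdH : IntervalIntegrable (dH m) volume c Real.pi := by
    apply ContinuousOn.intervalIntegrable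
    intro x hx
    have hx0 := (hpos x hx).ne'
    have hx1 : (m * x ^ 2 : ℝ) ≠ 0 := by positivity
    apply ContinuousAt.continuousWithinAt
    unfold dH
    fun_prop (disch := assumption)
  have hHint : ∫ x in c..Real.pi, dH m x
      = 6 * Real.log m + (6 * Real.log Real.pi + 8 * Real.sin 1 - Real.sin 2) := by
    rw [intervalIntegral.integral_eq_sub_of_hasDerivAt
      (fun x hx => hasDerivAt_H hm (hpos x hx)) hdH]
    have h1 : (m : ℝ) * c = 1 := by rw [hc]; field_simp
    have h2 : Real.sin (m * Real.pi) = 0 := Real.sin_nat_mul_pi m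
    have h3 : Real.sin (2 * (m * Real.pi)) = 0 := by rw [Real.sin_two_mul, h2]; ring
    have h4 : Real.log c = - Real.log m := by rw [hc, one_div, Real.log_inv]
    simp only [h1, h2, h3, h4, mul_one]
    ring
  have hbi : IntervalIntegrable (fun x : ℝ => Real.pi ^ 5 + 9 / (m * x ^ 2))
      volume c Real.pi := by
    apply ContinuousOn.intervalIntegrable
    intro x hx
    have hx0 := (hpos x hx).ne'
    have hx1 : (m * x ^ 2 : ℝ) ≠ 0 := by positivity
    apply ContinuousAt.continuousWithinAt
    fun_prop (disch := assumption)
  have hbint : ∫ x in c..Real.pi, (Real.pi ^ 5 + 9 / (m * x ^ 2)) ≤ Real.pi ^ 6 + 9 := by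
    have hd : ∀ x ∈ Set.uIcc c Real.pi, HasDerivAt
        (fun x : ℝ => Real.pi ^ 5 * x - 9 / m * x⁻¹) (Real.pi ^ 5 + 9 / (m * x ^ 2)) x := by
      intro x hx
      have hx0 := (hpos x hx).ne'
      have h1 := (hasDerivAt_id x).const_mul (Real.pi ^ 5)
      have h2 := (hasDerivAt_inv hx0).const_mul (9 / m : ℝ)
      refine (h1.sub h2).congr_deriv ?_
      field_simp
      ring
    rw [intervalIntegral.integral_eq_sub_of_hasDerivAt hd hbi]
    have h1 : 9 / m * c⁻¹ = 9 := by rw [hc]; field_simp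
    have h2 : 0 ≤ 9 / m * Real.pi⁻¹ := by positivity
    have h3 : 0 ≤ Real.pi ^ 5 * c := by positivity
    have h4 : Real.pi ^ 5 * Real.pi = Real.pi ^ 6 := by ring
    linarith
  have hA : |∫ x in (0 : ℝ)..c, f x| ≤ Real.pi ^ 4 := by
    have := intervalIntegral.norm_integral_le_of_norm_le_const (a := 0) (b := c) (f := f)
      (C := Real.pi ^ 4 * m) (by
        intro x hx
        rw [Set.uIoc_of_le hc0.le] at hx
        refine (integrand_le m hx.1 (hx.2.trans hcpi)).trans ?_
        have hx0 := hx.1.le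
        calc _ ≤ Real.pi ^ 4 * (m ^ 4 * c ^ 3) := by gcongr; exact hx.2
          _ = _ := by rw [hc]; field_simp)
    have e : Real.pi ^ 4 * m * |c - 0| = Real.pi ^ 4 := by
      rw [sub_zero, abs_of_pos hc0, hc]; field_simp
    rwa [e] at this
  have hB : |∫ x in c..Real.pi, (f x - dH m x)| ≤ Real.pi ^ 6 + 9 := by
    refine le_trans ?_ hbint
    rw [← Real.norm_eq_abs]
    refine intervalIntegral.norm_integral_le_of_norm_le hcpi ?_ hbi
    refine Eventually.of_forall fun x hx => ?_
    exact integrand_sub_le hm (hc0.trans hx.1) hx.2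
  rw [intervalIntegral.integral_sub hf2 hdH, hHint] at hB
  rw [hJ, ← intervalIntegral.integral_add_adjacent_intervals hf1 hf2, norm_one, mul_one,
    Real.norm_eq_abs]
  set A := ∫ x in (0 : ℝ)..c, f x
  set B := ∫ x in c..Real.pi, f x
  set D := 6 * Real.log Real.pi + 8 * Real.sin 1 - Real.sin 2
  have e : A + B - 6 * Real.log m = A + (B - (6 * Real.log m + D)) + D := by ring
  rw [e]
  exact (abs_add_le _ _).trans (add_le_add ((abs_add_le _ _).trans (add_le_add hA hB)) le_rfl)
end

section
/- As m → ∞ one has J₆(3,m) = 5·log m + O(1). -/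
/-!
Near `0` the weight `x ^ 3 / sin (x / 2) ^ 4` is `16 / x` up to a bounded error
(`weight_sub_bound`), and `sin ^ 6` has mean `5 / 16`, which accounts for the constant
`16 * (5 / 16) = 5`.  The interval is cut at `1 / m`.  On `[0, 1 / m]` the integrand is at most
`128 * m` (`integrand_bound`), hence contributes `O(1)`.  On `[1 / m, π]` the oscillating part
`sin ^ 6 - 5 / 16` has the bounded primitive `sinSixPrim`, so integration by parts against `1 / x`
costs `O(1)`, while `∫ 5 / x = 5 * log (π * m)`.  The integration by parts is carried out by
comparing the integrand with the derivative of
`x ↦ 5 * log x + (32 / m) * sinSixPrim (m * x / 2) / x`.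
-/

open MeasureTheory Filter Asymptotics

/-- `J₆(a,m) := ∫₀^π x^a sin⁶(mx/2)/sin⁴(x/2) dx`. -/
noncomputable def J6 (a : ℝ) (m : ℕ) : ℝ :=
  ∫ x in (0 : ℝ)..Real.pi, x ^ a * Real.sin (m * x / 2) ^ 6 / Real.sin (x / 2) ^ 4

/-- A bounded primitive of the mean-zero function `sin ^ 6 - 5 / 16`. -/
noncomputable def sinSixPrim (u : ℝ) : ℝ :=
  -(Real.cos u * (Real.sin u ^ 5 / 6 + 5 * Real.sin u ^ 3 / 24 + 5 * Real.sin u / 16))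

lemma hasDerivAt_sinSixPrim (u : ℝ) :
    HasDerivAt sinSixPrim (Real.sin u ^ 6 - 5 / 16) u := by
  have hs := Real.hasDerivAt_sin u
  have hc := Real.hasDerivAt_cos u
  have h := (hc.mul ((((hs.pow 5).div_const 6).add
    (((hs.pow 3).const_mul 5).div_const 24)).add ((hs.const_mul 5).div_const 16))).neg
  refine h.congr_deriv ?_
  have hcs : Real.cos u ^ 2 = 1 - Real.sin u ^ 2 := Real.cos_sq' u
  simp only [Pi.add_apply, Pi.pow_apply]
  norm_num
  linear_combination
    -(5 * Real.sin u ^ 4 / 6 + 15 * Real.sin u ^ 2 / 24 + 5 / 16) * hcs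

lemma abs_sinSixPrim_le (u : ℝ) : |sinSixPrim u| ≤ 1 := by
  have h1 := Real.abs_cos_le_one u
  have h2 := Real.abs_sin_le_one u
  have h3 : |Real.sin u| ^ 3 ≤ 1 := pow_le_one₀ (abs_nonneg _) h2
  have h5 : |Real.sin u| ^ 5 ≤ 1 := pow_le_one₀ (abs_nonneg _) h2
  rw [← abs_pow] at h3 h5
  rw [sinSixPrim, abs_neg, abs_mul]
  refine mul_le_one₀ h1 (abs_nonneg _) ?_
  rw [abs_le] at h2 h3 h5 ⊢
  constructor <;> linarith [h2.1, h2.2, h3.1, h3.2, h5.1, h5.2]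

/-- Jordan's inequality, with `2 / π` weakened to `1 / 2`. -/
lemma quarter_le_sin_half {x : ℝ} (h0 : 0 < x) (hp : x ≤ Real.pi) :
    x / 4 ≤ Real.sin (x / 2) := by
  have h := Real.mul_le_sin (x := x / 2) (by linarith) (by linarith)
  refine le_trans ?_ h
  have : 1 / 2 ≤ 2 / Real.pi := by
    rw [div_le_div_iff₀ (by norm_num) Real.pi_pos]
    linarith [Real.pi_le_four]
  nlinarith

lemma weight_sub_bound {x : ℝ} (h0 : 0 < x) (hp : x ≤ Real.pi) :
    |x ^ 3 / Real.sin (x / 2) ^ 4 - 16 / x| ≤ 1024 := by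
  have hq := quarter_le_sin_half h0 hp
  have hlt := Real.sin_lt (x := x / 2) (by linarith)
  have hcub : x / 2 - Real.sin (x / 2) ≤ (x / 2) ^ 3 := by
    have := Real.sin_gt_sub_cube (x := x / 2) (by linarith)
    have h3 : 0 < (x / 2) ^ 3 := by positivity
    linarith
  have hx4 : x ≤ 4 := hp.trans Real.pi_le_four
  obtain ⟨y, rfl⟩ : ∃ y, x = 2 * y := ⟨x / 2, by ring⟩
  rw [show 2 * y / 2 = y by ring] at *
  set s := Real.sin y with hs
  have hy : 0 < y := by linarith
  have hs0 : 0 < s := by linarith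
  have hs4 : y ^ 4 / 16 ≤ s ^ 4 := by
    have := pow_le_pow_left₀ (by linarith) (show y / 2 ≤ s by linarith) 4
    calc y ^ 4 / 16 = (y / 2) ^ 4 := by ring
      _ ≤ _ := this
  have hnum0 : 0 ≤ y ^ 4 - s ^ 4 := sub_nonneg.2 (pow_le_pow_left₀ hs0.le hlt.le 4)
  have hnum : y ^ 4 - s ^ 4 ≤ 4 * y ^ 6 := by
    have e : y ^ 4 - s ^ 4 = (y - s) * ((y + s) * (y ^ 2 + s ^ 2)) := by ring
    have hsq : s ^ 2 ≤ y ^ 2 := pow_le_pow_left₀ hs0.le hlt.le 2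
    calc y ^ 4 - s ^ 4 = (y - s) * ((y + s) * (y ^ 2 + s ^ 2)) := e
      _ ≤ y ^ 3 * ((y + y) * (y ^ 2 + y ^ 2)) := by gcongr
      _ = 4 * y ^ 6 := by ring
  have e : (2 * y) ^ 3 / s ^ 4 - 16 / (2 * y) = 8 * (y ^ 4 - s ^ 4) / (y * s ^ 4) := by
    field_simp
    ring
  rw [e, abs_of_nonneg (by positivity), div_le_iff₀ (by positivity)]
  calc 8 * (y ^ 4 - s ^ 4) ≤ 8 * (4 * y ^ 6) := by gcongr
    _ = 512 * y * (y * (y ^ 4 / 16)) := by ring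
    _ ≤ 1024 * (y * s ^ 4) := by
      gcongr
      linarith

lemma integrand_bound (m : ℕ) {x : ℝ} (h0 : 0 < x) (hp : x ≤ Real.pi) :
    ‖x ^ 3 * Real.sin (m * x / 2) ^ 6 / Real.sin (x / 2) ^ 4‖ ≤ 128 * m := by
  have hq := quarter_le_sin_half h0 hp
  have hs0 : 0 < Real.sin (x / 2) := by linarith
  have hs4 := pow_le_pow_left₀ (by linarith) hq 4
  have hS : Real.sin (m * x / 2) ^ 6 ≤ m * x / 2 := by
    have h6 : |Real.sin (m * x / 2)| ^ 6 ≤ |Real.sin (m * x / 2)| :=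
      pow_le_of_le_one (abs_nonneg _) (Real.abs_sin_le_one _) (by norm_num)
    have h1 : |Real.sin (m * x / 2)| ≤ |m * x / 2| := Real.abs_sin_le_abs
    rw [abs_of_nonneg (by positivity : (0 : ℝ) ≤ m * x / 2)] at h1
    rw [Even.pow_abs (by decide)] at h6
    exact h6.trans h1
  rw [Real.norm_of_nonneg
      (div_nonneg (mul_nonneg (by positivity) (Even.pow_nonneg (by decide) _)) (by positivity)),
    div_le_iff₀ (by positivity)]
  calc x ^ 3 * Real.sin (m * x / 2) ^ 6 ≤ x ^ 3 * (m * x / 2) := by gcongr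
    _ = 128 * m * (x / 4) ^ 4 := by ring
    _ ≤ _ := by gcongr

/-- `J₆(3,m) = 5 log m + O(1)` as the integer `m → ∞`. -/
theorem stmt_10 :
    (fun m : ℕ => J6 3 m - 5 * Real.log m) =O[atTop] fun _ : ℕ => (1 : ℝ) := by
  rw [isBigO_one_iff]
  refine isBoundedUnder_of_eventually_le
    (a := 128 + (1024 * Real.pi + 32) + (5 * Real.log Real.pi + 64)) ?_
  filter_upwards [eventually_ge_atTop 1] with m hm
  have hm1 : (1 : ℝ) ≤ m := by exact_mod_cast hm
  have hm0 : (0 : ℝ) < m := by linarith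
  have hpi := Real.pi_gt_three
  have hc0 : 0 < 1 / (m : ℝ) := by positivity
  have hcpi : 1 / (m : ℝ) ≤ Real.pi := by
    have : 1 / (m : ℝ) ≤ 1 := by rw [div_le_one hm0]; exact hm1
    linarith
  set c : ℝ := 1 / m with hc
  set f : ℝ → ℝ := fun x => x ^ 3 * Real.sin (m * x / 2) ^ 6 / Real.sin (x / 2) ^ 4 with hf
  have hJ : J6 3 m = ∫ x in (0 : ℝ)..Real.pi, f x := by
    simp only [J6, hf]
    congr 1
    ext x
    norm_cast
  have hfm : Measurable f := by fun_prop
  have hfint : IntervalIntegrable f volume 0 Real.pi := by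
    rw [intervalIntegrable_iff_integrableOn_Ioc_of_le (by linarith)]
    refine Measure.integrableOn_of_bounded (M := 128 * m) (by simp) hfm.aestronglyMeasurable ?_
    exact (ae_restrict_iff' measurableSet_Ioc).2
      (Eventually.of_forall fun x hx => integrand_bound m hx.1 hx.2)
  have hmem : c ∈ Set.uIcc 0 Real.pi := by
    rw [Set.uIcc_of_le (by linarith)]; exact ⟨hc0.le, hcpi⟩
  have hf1 : IntervalIntegrable f volume 0 c :=
    hfint.mono_set (Set.uIcc_subset_uIcc_left hmem)
  have hf2 : IntervalIntegrable f volume c Real.pi :=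
    hfint.mono_set (Set.uIcc_subset_uIcc_right hmem)
  have hsplit := intervalIntegral.integral_add_adjacent_intervals hf1 hf2
  have hI1 : ‖∫ x in (0 : ℝ)..c, f x‖ ≤ 128 := by
    have h := intervalIntegral.norm_integral_le_of_norm_le_const (a := 0) (b := c) (f := f)
      (C := 128 * m) (by
        intro x hx
        rw [Set.uIoc_of_le hc0.le] at hx
        exact integrand_bound m hx.1 (hx.2.trans hcpi))
    rw [sub_zero, abs_of_pos hc0, hc] at h
    refine h.trans (le_of_eq ?_)
    field_simp
  -- The comparison function, whose derivative `φ` differs from `f` by an error of bounded integral.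
  set Φ : ℝ → ℝ := fun x => 5 * Real.log x + 32 / m * (sinSixPrim (m * x / 2) / x) with hΦ
  set φ : ℝ → ℝ := fun x => 16 / x * Real.sin (m * x / 2) ^ 6
    - 32 / m * sinSixPrim (m * x / 2) / x ^ 2 with hφ
  have hΦd : ∀ x, 0 < x → HasDerivAt Φ (φ x) x := by
    intro x hx
    have hlin : HasDerivAt (fun x : ℝ => m * x / 2) (m / 2) x := by
      simpa using ((hasDerivAt_id x).const_mul (m : ℝ)).div_const 2
    have hF := (hasDerivAt_sinSixPrim (m * x / 2)).comp x hlin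
    have h := ((Real.hasDerivAt_log hx.ne').const_mul 5).add
      ((hF.div (hasDerivAt_id x) hx.ne').const_mul (32 / (m : ℝ)))
    refine h.congr_deriv ?_
    simp only [hφ, Function.comp, id]
    field_simp
    ring
  have hFc : Continuous sinSixPrim :=
    continuous_iff_continuousAt.2 fun u => (hasDerivAt_sinSixPrim u).continuousAt
  have hφint : IntervalIntegrable φ volume c Real.pi := by
    refine ContinuousOn.intervalIntegrable ?_
    rw [Set.uIcc_of_le hcpi]
    intro x hx
    have hx0 : x ≠ 0 := (hc0.trans_le hx.1).ne'
    have : ContinuousAt φ x := by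
      have h2 : x ^ 2 ≠ 0 := pow_ne_zero 2 hx0
      simp only [hφ]
      fun_prop (disch := assumption)
    exact this.continuousWithinAt
  have hΦI : ∫ x in c..Real.pi, φ x = Φ Real.pi - Φ c := by
    refine intervalIntegral.integral_eq_sub_of_hasDerivAt (fun x hx => ?_) hφint
    rw [Set.uIcc_of_le hcpi] at hx
    exact hΦd x (hc0.trans_le hx.1)
  -- The primitive of the pointwise bound `1024 + 32 / (m x²)` for `|f - φ|`.
  have hbd : ∀ x, 0 < x → HasDerivAt (fun x : ℝ => 1024 * x - 32 / m * x⁻¹)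
      (1024 + 32 / m / x ^ 2) x := by
    intro x hx
    have h := ((hasDerivAt_id x).const_mul (1024 : ℝ)).sub
      ((hasDerivAt_inv hx.ne').const_mul (32 / (m : ℝ)))
    refine h.congr_deriv ?_
    field_simp
    ring
  have hbint : IntervalIntegrable (fun x : ℝ => 1024 + 32 / m / x ^ 2) volume c Real.pi := by
    refine ContinuousOn.intervalIntegrable ?_
    rw [Set.uIcc_of_le hcpi]
    intro x hx
    have h2 : x ^ 2 ≠ 0 := pow_ne_zero 2 (hc0.trans_le hx.1).ne'
    have : ContinuousAt (fun x : ℝ => 1024 + 32 / m / x ^ 2) x := by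
      fun_prop (disch := assumption)
    exact this.continuousWithinAt
  have hbI := intervalIntegral.integral_eq_sub_of_hasDerivAt (fun x hx => hbd x (by
    rw [Set.uIcc_of_le hcpi] at hx
    exact hc0.trans_le hx.1)) hbint
  have hI2 : ‖∫ x in c..Real.pi, (f x - φ x)‖ ≤ 1024 * Real.pi + 32 := by
    refine (intervalIntegral.norm_integral_le_of_norm_le hcpi
      (Eventually.of_forall fun x hx => ?_) hbint).trans ?_
    · have hx0 : 0 < x := hc0.trans hx.1
      have e : f x - φ x = (x ^ 3 / Real.sin (x / 2) ^ 4 - 16 / x) * Real.sin (m * x / 2) ^ 6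
          + 32 / m / x ^ 2 * sinSixPrim (m * x / 2) := by
        simp only [hf, hφ]; ring
      rw [e]
      refine (norm_add_le _ _).trans (add_le_add ?_ ?_)
      · rw [norm_mul, norm_pow, Real.norm_eq_abs, Real.norm_eq_abs]
        exact (mul_le_of_le_one_right (abs_nonneg _)
          (pow_le_one₀ (abs_nonneg _) (Real.abs_sin_le_one _))).trans (weight_sub_bound hx0 hx.2)
      · rw [norm_mul, Real.norm_of_nonneg (by positivity), Real.norm_eq_abs]
        exact mul_le_of_le_one_right (by positivity) (abs_sinSixPrim_le _)
    · rw [hbI]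
      have e1 : 32 / (m : ℝ) * c⁻¹ = 32 := by rw [hc]; field_simp
      have e2 : 0 ≤ 32 / (m : ℝ) * Real.pi⁻¹ := by positivity
      simp only [e1]
      linarith
  rw [intervalIntegral.integral_sub hf2 hφint, hΦI] at hI2
  have hosc : ∀ x, c ≤ x → |32 / m * (sinSixPrim (m * x / 2) / x)| ≤ 32 := by
    intro x hx
    have hx0 : 0 < x := hc0.trans_le hx
    have e : 32 / m * (sinSixPrim (m * x / 2) / x) = 32 / (m * x) * sinSixPrim (m * x / 2) := by
      field_simp
    have hmx : 1 ≤ m * x := by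
      rw [hc, div_le_iff₀ hm0] at hx
      linarith
    rw [e, abs_mul, abs_of_pos (by positivity)]
    refine (mul_le_of_le_one_right (by positivity) (abs_sinSixPrim_le _)).trans ?_
    rw [div_le_iff₀ (by positivity)]
    linarith
  have ho1 := abs_le.1 (hosc c le_rfl)
  have ho2 := abs_le.1 (hosc Real.pi hcpi)
  have hlogc : Real.log c = -Real.log m := by rw [hc, one_div, Real.log_inv]
  have hlogpi : 0 ≤ Real.log Real.pi := Real.log_nonneg (by linarith)
  simp only [hΦ, hlogc] at hI2
  rw [hJ, ← hsplit]
  rw [Real.norm_eq_abs, abs_le] at hI1 hI2 ⊢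
  constructor <;> linarith [hI1.1, hI1.2, hI2.1, hI2.2, ho1.1, ho1.2, ho2.1, ho2.2]
end

section
/- For every a > 3, as m → ∞ one has J₄(a,m) = C''₄₁(a) + O(m^{−min(a−3, 2)}), where C''₄₁(a) := (3/8)·∫₀^π x^a/sin⁴(x/2) dx. -/
/-!
Since `sin⁴ θ = 3/8 - cos (2θ)/2 + cos (4θ)/8`, the difference in question is
`-I(m)/2 + I(2m)/8`, where `I(n) = ∫₀^π f(x) cos (n x) dx` and `f(x) = x^a / sin⁴(x/2)`,
so it suffices to bound `I(n)` by a multiple of `n^{-min(a-3,2)}` (`osc_bound`).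

Split `I(n)` at `t = 1/n`. As `sin (x/2) ≥ x/π` on `[0,π]`, `|f| ≤ π⁴ x^{a-4}`, and the part over
`[0,t]` is `O(t^{a-3})`. On `[t,π]` the function `t f(x) sin (n x) + t² f'(x) cos (n x)` has
derivative `f(x) cos (n x) + t² f''(x) cos (n x)`, which is two integrations by parts at once. The
boundary terms at `t` are `O(t^{a-3})`; at `π` the first vanishes because `n` is an integer and the
second is `O(t²)`. For the remaining integral, put `u = x cot(x/2)`. Then
`f'' = x^{a-2} sin⁻⁴(x/2) (a(a-1) - 4au + 5u² + x²)`, and `u = 2 + O(x²)` turns the bracket into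
`(a-4)(a-5) + O(x²)`. The factor `a - 5` is kept: `|a-5| ∫_t^π x^{a-6} = |π^{a-5} - t^{a-5}|`
holds for every `a`, so that no logarithm appears at `a = 5`.
-/

open MeasureTheory Filter Asymptotics

namespace OscAux

open Real

/-- The amplitude `x^a / sin⁴(x/2)`. -/
noncomputable def f (a x : ℝ) : ℝ := x ^ a / sin (x / 2) ^ 4

/-- The derivative of `f a` on `(0, π]`. -/
noncomputable def f1 (a x : ℝ) : ℝ :=
  a * x ^ (a - 1) / sin (x / 2) ^ 4 - 2 * x ^ a * cos (x / 2) / sin (x / 2) ^ 5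

/-- The second derivative of `f a` on `(0, π]`. -/
noncomputable def f2 (a x : ℝ) : ℝ :=
  a * (a - 1) * x ^ (a - 2) / sin (x / 2) ^ 4 - 4 * a * x ^ (a - 1) * cos (x / 2) / sin (x / 2) ^ 5
    + x ^ a * (1 / sin (x / 2) ^ 4 + 5 * cos (x / 2) ^ 2 / sin (x / 2) ^ 6)

lemma sin_half_lower {x : ℝ} (h0 : 0 < x) (hπ : x ≤ π) : x / π ≤ sin (x / 2) := by
  have h := mul_le_sin (x := x / 2) (by linarith) (by linarith)
  calc x / π = 2 / π * (x / 2) := by ring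
    _ ≤ _ := h

lemma sin_half_pos {x : ℝ} (h0 : 0 < x) (hπ : x ≤ π) : 0 < sin (x / 2) :=
  sin_pos_of_pos_of_lt_pi (by linarith) (by linarith [pi_pos])

lemma inv_sin_pow_le {x : ℝ} (h0 : 0 < x) (hπ : x ≤ π) :
    1 / sin (x / 2) ^ 4 ≤ π ^ 4 * x ^ (-4 : ℝ) := by
  have h := sin_half_lower h0 hπ
  have h2 : (x / π) ^ 4 ≤ sin (x / 2) ^ 4 := by
    have := pi_pos
    gcongr
  have e : π ^ 4 * x ^ (-4 : ℝ) = 1 / (x / π) ^ 4 := by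
    rw [rpow_neg h0.le, show (4 : ℝ) = ((4 : ℕ) : ℝ) by norm_num, rpow_natCast]
    field_simp
  rw [e]
  exact one_div_le_one_div_of_le (by have := pi_pos; positivity) h2

/-- `x cot(x/2)` lies in `[0,2]` and is within `x²` of its limit `2` at the origin. -/
lemma cot_bounds {x : ℝ} (h0 : 0 < x) (hπ : x ≤ π) :
    0 ≤ x * cos (x / 2) / sin (x / 2) ∧ x * cos (x / 2) / sin (x / 2) ≤ 2 ∧
      2 - x * cos (x / 2) / sin (x / 2) ≤ x ^ 2 := by
  have hs := sin_half_pos h0 hπ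
  have hc : 0 ≤ cos (x / 2) := cos_nonneg_of_neg_pi_div_two_le_of_le (by linarith) (by linarith)
  have h1 := sin_half_lower h0 hπ
  have hsx : sin (x / 2) ≤ x / 2 := (sin_lt (by linarith)).le
  have hc1 : 1 - (x / 2) ^ 2 / 2 ≤ cos (x / 2) := one_sub_sq_div_two_le_cos
  have hs4 : x / 4 ≤ sin (x / 2) := by
    refine le_trans ?_ h1
    exact div_le_div_of_nonneg_left h0.le pi_pos pi_le_four
  have hxc : x * cos (x / 2) ≤ 2 * sin (x / 2) := by
    rcases hπ.lt_or_eq with h | h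
    · have hc0 : 0 < cos (x / 2) := cos_pos_of_mem_Ioo ⟨by linarith, by linarith⟩
      have ht := lt_tan (x := x / 2) (by linarith) (by linarith)
      rw [tan_eq_sin_div_cos, lt_div_iff₀ hc0] at ht
      linarith
    · subst h; simp
  refine ⟨by positivity, by rw [div_le_iff₀ hs]; exact hxc, ?_⟩
  rw [sub_le_iff_le_add, ← sub_le_iff_le_add', le_div_iff₀ hs]
  have a1 : x * (1 - (x / 2) ^ 2 / 2) ≤ x * cos (x / 2) := by gcongr
  have a2 : x ^ 2 * (x / 4) ≤ x ^ 2 * sin (x / 2) := by gcongr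
  nlinarith [pow_pos h0 3]

lemma f_bound {a x : ℝ} (h0 : 0 < x) (hπ : x ≤ π) : |f a x| ≤ π ^ 4 * x ^ (a - 4) := by
  have hs := sin_half_pos h0 hπ
  rw [f, abs_of_nonneg (by positivity), sub_eq_add_neg, rpow_add h0, div_eq_mul_one_div]
  calc _ ≤ x ^ a * (π ^ 4 * x ^ (-4 : ℝ)) := by gcongr; exact inv_sin_pow_le h0 hπ
    _ = _ := by ring

lemma f1_bound {a x : ℝ} (ha : 3 < a) (h0 : 0 < x) (hπ : x ≤ π) :
    |f1 a x| ≤ π ^ 4 * (a + 4) * x ^ (a - 5) := by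
  have hs := sin_half_pos h0 hπ
  obtain ⟨u0, u2, -⟩ := cot_bounds h0 hπ
  have e : f1 a x = x ^ (a - 1) * (1 / sin (x / 2) ^ 4) *
      (a - 2 * (x * cos (x / 2) / sin (x / 2))) := by
    have : x ^ a = x ^ (a - 1) * x := by
      rw [← rpow_add_one h0.ne']; congr 1; ring
    rw [f1, this]; field_simp
  have hb : |a - 2 * (x * cos (x / 2) / sin (x / 2))| ≤ a + 4 := by
    rw [abs_le]; constructor <;> linarith
  rw [e, abs_mul, abs_of_nonneg (a := x ^ (a - 1) * _) (by positivity)]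
  calc _ ≤ x ^ (a - 1) * (π ^ 4 * x ^ (-4 : ℝ)) * (a + 4) := by
        gcongr; exact inv_sin_pow_le h0 hπ
    _ = _ := by
        rw [show a - 5 = (a - 1) + (-4) by ring, rpow_add h0]; ring

lemma f2_bound {a x : ℝ} (ha : 3 < a) (h0 : 0 < x) (hπ : x ≤ π) :
    |f2 a x| ≤ π ^ 4 * |a - 4| * (|a - 5| * x ^ (a - 6)) +
      π ^ 4 * (4 * a + 21) * x ^ (a - 4) := by
  have hs := sin_half_pos h0 hπ
  obtain ⟨u0, u2, u3⟩ := cot_bounds h0 hπ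
  have e : f2 a x = x ^ (a - 2) * (1 / sin (x / 2) ^ 4) *
      (a * (a - 1) - 4 * a * (x * cos (x / 2) / sin (x / 2)) +
        5 * (x * cos (x / 2) / sin (x / 2)) ^ 2 + x ^ 2) := by
    have h1 : x ^ a = x ^ (a - 2) * x ^ 2 := by
      rw [← rpow_natCast x 2, ← rpow_add h0]; congr 1; norm_num
    have h2 : x ^ (a - 1) = x ^ (a - 2) * x := by
      rw [← rpow_add_one h0.ne']; congr 1; ring
    rw [f2, h1, h2]; field_simp; ring
  set u := x * cos (x / 2) / sin (x / 2) with hu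
  have hb : |a * (a - 1) - 4 * a * u + 5 * u ^ 2 + x ^ 2| ≤
      |a - 4| * |a - 5| + (4 * a + 21) * x ^ 2 := by
    -- At `u = 2`, `x = 0` the bracket is `(a - 4) * (a - 5)`; the rest is `O(x²)`.
    have e2 : a * (a - 1) - 4 * a * u + 5 * u ^ 2 + x ^ 2 =
      (a - 4) * (a - 5) + ((2 - u) * (4 * a - 5 * u - 10) + x ^ 2) := by ring
    rw [e2, ← abs_mul]
    refine (abs_add_le _ _).trans ?_
    gcongr
    refine (abs_add_le _ _).trans ?_
    rw [abs_mul, abs_of_nonneg (by linarith : 0 ≤ 2 - u), abs_of_nonneg (sq_nonneg x)]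
    have : |4 * a - 5 * u - 10| ≤ 4 * a + 20 := by
      rw [abs_le]; constructor <;> linarith
    calc _ ≤ x ^ 2 * (4 * a + 20) + x ^ 2 := by gcongr
      _ = _ := by ring
  rw [e, abs_mul, abs_of_nonneg (a := x ^ (a - 2) * _) (by positivity)]
  calc _ ≤ x ^ (a - 2) * (π ^ 4 * x ^ (-4 : ℝ)) *
          (|a - 4| * |a - 5| + (4 * a + 21) * x ^ 2) := by
        gcongr; exact inv_sin_pow_le h0 hπ
    _ = _ := by
        have h1 : x ^ (a - 4) = x ^ (a - 6) * x ^ 2 := by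
          rw [← rpow_natCast x 2, ← rpow_add h0]; congr 1; norm_num; ring
        rw [h1, show a - 6 = (a - 2) + (-4) by ring, rpow_add h0]; ring

lemma hasDerivAt_f {a x : ℝ} (h0 : 0 < x) (hπ : x ≤ π) : HasDerivAt (f a) (f1 a x) x := by
  have hs := sin_half_pos h0 hπ
  have hS : HasDerivAt (fun y : ℝ => sin (y / 2)) (cos (x / 2) * (1 / 2)) x :=
    ((hasDerivAt_id x).div_const 2).sin
  have := (hasDerivAt_rpow_const (x := x) (p := a) (Or.inl h0.ne')).div (hS.pow 4)
    (by simpa using (pow_pos hs 4).ne')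
  refine this.congr_deriv ?_
  simp only [f1, Pi.pow_apply]
  field_simp
  push_cast
  ring

lemma hasDerivAt_f1 {a x : ℝ} (h0 : 0 < x) (hπ : x ≤ π) : HasDerivAt (f1 a) (f2 a x) x := by
  have hs := sin_half_pos h0 hπ
  have hS : HasDerivAt (fun y : ℝ => sin (y / 2)) (cos (x / 2) * (1 / 2)) x :=
    ((hasDerivAt_id x).div_const 2).sin
  have hC : HasDerivAt (fun y : ℝ => cos (y / 2)) (-sin (x / 2) * (1 / 2)) x :=
    ((hasDerivAt_id x).div_const 2).cos
  have hA := (hasDerivAt_rpow_const (x := x) (p := a) (Or.inl h0.ne'))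
  have hB := (hasDerivAt_rpow_const (x := x) (p := a - 1) (Or.inl h0.ne'))
  have := ((hB.const_mul a).div (hS.pow 4) (by simpa using (pow_pos hs 4).ne')).sub
    (((hA.const_mul 2).mul hC).div (hS.pow 5) (by simpa using (pow_pos hs 5).ne'))
  refine this.congr_deriv ?_
  simp only [f2, Pi.pow_apply, Pi.mul_apply]
  rw [show a - 1 - 1 = a - 2 by ring]
  field_simp
  push_cast
  ring

lemma continuousOn_f2 {a t : ℝ} (ht : 0 < t) : ContinuousOn (f2 a) (Set.Icc t π) := by
  intro x hx
  have h0 : 0 < x := ht.trans_le hx.1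
  have hs := (sin_half_pos h0 hx.2).ne'
  have hr : ∀ p : ℝ, ContinuousAt (fun y : ℝ => y ^ p) x := fun p =>
    continuousAt_rpow_const _ _ (Or.inl h0.ne')
  have hS : ContinuousAt (fun y : ℝ => sin (y / 2)) x := by fun_prop
  have hC : ContinuousAt (fun y : ℝ => cos (y / 2)) x := by fun_prop
  apply ContinuousAt.continuousWithinAt
  unfold f2
  refine ContinuousAt.add (ContinuousAt.sub ?_ ?_) (ContinuousAt.mul (hr _) (ContinuousAt.add ?_ ?_))
  · exact (continuousAt_const.mul (hr _)).div (hS.pow 4) (pow_ne_zero _ hs)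
  · exact ((continuousAt_const.mul (hr _)).mul hC).div (hS.pow 5) (pow_ne_zero _ hs)
  · exact continuousAt_const.div (hS.pow 4) (pow_ne_zero _ hs)
  · exact (continuousAt_const.mul (hC.pow 2)).div (hS.pow 6) (pow_ne_zero _ hs)

lemma intervalIntegrable_f_mul {a : ℝ} (ha : 3 < a) {g : ℝ → ℝ} (hg : Continuous g)
    (hg1 : ∀ x, |g x| ≤ 1) {s t : ℝ} (hs : 0 ≤ s) (hst : s ≤ t) (ht : t ≤ π) :
    IntervalIntegrable (fun x => f a x * g x) volume s t := by
  have hi : IntervalIntegrable (fun x : ℝ => π ^ 4 * x ^ (a - 4)) volume s t :=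
    (intervalIntegral.intervalIntegrable_rpow' (by linarith)).const_mul _
  refine hi.mono_fun' ?_ ?_
  · have : Measurable (fun x => f a x * g x) := by
      unfold f
      have := hg.measurable
      fun_prop
    exact this.aestronglyMeasurable
  · rw [Set.uIoc_of_le hst]
    filter_upwards [ae_restrict_mem measurableSet_Ioc] with x hx
    rw [norm_eq_abs, abs_mul]
    calc _ ≤ |f a x| * 1 := by gcongr; exact hg1 x
      _ ≤ _ := by rw [mul_one]; exact f_bound (hs.trans_lt hx.1) (hx.2.trans ht)

/-- The part of the oscillatory integral near the origin. -/
lemma near_bound {a : ℝ} (ha : 3 < a) (n : ℝ) {t : ℝ} (h0 : 0 < t) (ht : t ≤ π) :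
    |∫ x in (0 : ℝ)..t, f a x * cos (n * x)| ≤ π ^ 4 / (a - 3) * t ^ (a - 3) := by
  have hi : IntervalIntegrable (fun x : ℝ => π ^ 4 * x ^ (a - 4)) volume 0 t :=
    (intervalIntegral.intervalIntegrable_rpow' (by linarith)).const_mul _
  have := intervalIntegral.norm_integral_le_of_norm_le (f := fun x => f a x * cos (n * x)) h0.le
    (Filter.Eventually.of_forall fun x hx => ?_) hi
  · refine this.trans (le_of_eq ?_)
    rw [intervalIntegral.integral_const_mul, integral_rpow (Or.inl (by linarith)),
      show a - 4 + 1 = a - 3 by ring, zero_rpow (by linarith)]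
    ring
  · rw [norm_eq_abs, abs_mul]
    calc _ ≤ |f a x| * 1 := by gcongr; exact abs_cos_le_one _
      _ ≤ _ := by rw [mul_one]; exact f_bound hx.1 (hx.2.trans ht)

/-- The `L¹` bound for `f''` away from the origin, without a logarithm at `a = 5`. -/
lemma f2_integral_bound {a : ℝ} (ha : 3 < a) (n : ℝ) {t : ℝ} (h0 : 0 < t) (ht : t ≤ π) :
    |∫ x in t..π, f2 a x * cos (n * x)| ≤
      π ^ 4 * |a - 4| * (π ^ (a - 5) + t ^ (a - 5)) +
        π ^ 4 * (4 * a + 21) * (π ^ (a - 3) / (a - 3)) := by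
  have hz : (0 : ℝ) ∉ Set.uIcc t π := by
    rw [Set.uIcc_of_le ht]; exact fun h => absurd h.1 (not_le.2 h0)
  have hi1 : IntervalIntegrable (fun x : ℝ => π ^ 4 * |a - 4| * (|a - 5| * x ^ (a - 6)))
      volume t π :=
    ((intervalIntegral.intervalIntegrable_rpow (Or.inr hz)).const_mul _).const_mul _
  have hi2 : IntervalIntegrable (fun x : ℝ => π ^ 4 * (4 * a + 21) * x ^ (a - 4)) volume t π :=
    (intervalIntegral.intervalIntegrable_rpow (Or.inr hz)).const_mul _
  have h := intervalIntegral.norm_integral_le_of_norm_le (f := fun x => f2 a x * cos (n * x)) ht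
    (Filter.Eventually.of_forall fun x hx => ?_) (hi1.add hi2)
  · refine h.trans ?_
    rw [intervalIntegral.integral_add hi1 hi2, intervalIntegral.integral_const_mul,
      intervalIntegral.integral_const_mul, intervalIntegral.integral_const_mul]
    have e1 : |a - 5| * (∫ x in t..π, x ^ (a - 6)) ≤ π ^ (a - 5) + t ^ (a - 5) := by
      have hP : 0 ≤ π ^ (a - 5) := rpow_nonneg pi_pos.le _
      have hT : 0 ≤ t ^ (a - 5) := rpow_nonneg h0.le _
      by_cases h5 : a = 5
      -- `x ^ (a - 6) = x⁻¹` has no power antiderivative here, but the factor `|a - 5|` vanishes.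
      · subst h5; simp
      · rw [integral_rpow (Or.inr ⟨fun h => h5 (by linarith), hz⟩),
          show a - 6 + 1 = a - 5 by ring]
        calc _ ≤ |(|a - 5| * ((π ^ (a - 5) - t ^ (a - 5)) / (a - 5)))| := le_abs_self _
          _ = |π ^ (a - 5) - t ^ (a - 5)| := by
              have : |a - 5| ≠ 0 := abs_ne_zero.2 (sub_ne_zero.2 h5)
              rw [abs_mul, abs_div, abs_abs]; field_simp
          _ ≤ _ := by rw [abs_le]; constructor <;> linarith
    have e2 : (∫ x in t..π, x ^ (a - 4)) ≤ π ^ (a - 3) / (a - 3) := by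
      rw [integral_rpow (Or.inl (by linarith)), show a - 4 + 1 = a - 3 by ring]
      have : 0 < a - 3 := by linarith
      have hT : 0 ≤ t ^ (a - 3) := rpow_nonneg h0.le _
      gcongr
      linarith
    gcongr
  · have h0' := h0.trans hx.1
    rw [norm_eq_abs, abs_mul]
    calc _ ≤ |f2 a x| * 1 := by gcongr; exact abs_cos_le_one _
      _ ≤ _ := by rw [mul_one]; exact f2_bound ha h0' hx.2

/-- Two integrations by parts on `[1/n, π]`, with `t = 1/n`; the boundary term in `sin (n x)` at `π`
is absent because `n` is an integer. -/
lemma far_identity {a : ℝ} (ha : 3 < a) {n : ℕ} {t : ℝ} (hnt : n * t = 1)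
    (h0 : 0 < t) (ht : t ≤ π) :
    (∫ x in t..π, f a x * cos (n * x)) =
      t ^ 2 * (f1 a π * cos (n * π)) - (t * (f a t * sin 1) + t ^ 2 * (f1 a t * cos 1)) -
        t ^ 2 * ∫ x in t..π, f2 a x * cos (n * x) := by
  have hi1 : IntervalIntegrable (fun x => f a x * cos (n * x)) volume t π :=
    intervalIntegrable_f_mul ha (by fun_prop) (fun x => abs_cos_le_one _) h0.le ht le_rfl
  have hi2 : IntervalIntegrable (fun x => f2 a x * cos (n * x)) volume t π := by
    apply ContinuousOn.intervalIntegrable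
    rw [Set.uIcc_of_le ht]
    exact (continuousOn_f2 h0).mul (by fun_prop)
  have key := intervalIntegral.integral_eq_sub_of_hasDerivAt (a := t) (b := π)
    (f := fun x => t * (f a x * sin (n * x)) + t ^ 2 * (f1 a x * cos (n * x)))
    (f' := fun x => f a x * cos (n * x) + t ^ 2 * (f2 a x * cos (n * x))) ?_
    (hi1.add (hi2.const_mul _))
  · rw [intervalIntegral.integral_add hi1 (hi2.const_mul _),
      intervalIntegral.integral_const_mul, sin_nat_mul_pi, hnt] at key
    linarith
  · intro x hx
    rw [Set.uIcc_of_le ht] at hx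
    have hx0 : 0 < x := h0.trans_le hx.1
    have hl : HasDerivAt (fun y : ℝ => (n : ℝ) * y) n x := by
      simpa using (hasDerivAt_id x).const_mul (n : ℝ)
    have := (((hasDerivAt_f (a := a) hx0 hx.2).mul hl.sin).const_mul t).add
      (((hasDerivAt_f1 (a := a) hx0 hx.2).mul hl.cos).const_mul (t ^ 2))
    refine this.congr_deriv ?_
    linear_combination (f a x * cos (n * x) - t * f1 a x * sin (n * x)) * hnt

/-- The cosine integrals of `f a` at integer frequencies decay at the claimed rate. The constant adds
up the contributions of `[0, 1/n]`, the three boundary terms and the integral of `f''`. -/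
lemma osc_bound {a : ℝ} (ha : 3 < a) : ∃ C : ℝ, 0 ≤ C ∧ ∀ n : ℕ, 1 ≤ n →
    |∫ x in (0 : ℝ)..π, f a x * cos (n * x)| ≤ C * (n : ℝ) ^ (-(min (a - 3) 2)) := by
  have ha3 : 0 < a - 3 := by linarith
  have hπ := pi_pos
  refine ⟨π ^ 4 / (a - 3) + |f1 a π| + π ^ 4 + π ^ 4 * (a + 4) +
    (π ^ 4 * |a - 4| * (π ^ (a - 5) + 1) +
        π ^ 4 * (4 * a + 21) * (π ^ (a - 3) / (a - 3))), by positivity, fun n hn => ?_⟩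
  have hn1 : (1 : ℝ) ≤ n := by exact_mod_cast hn
  have hn0 : (0 : ℝ) < n := by linarith
  rw [rpow_neg hn0.le, ← inv_rpow hn0.le]
  set t : ℝ := (n : ℝ)⁻¹ with htdef
  have hnt : n * t = 1 := mul_inv_cancel₀ hn0.ne'
  have h0 : 0 < t := inv_pos.2 hn0
  have h1 : t ≤ 1 := inv_le_one_of_one_le₀ hn1
  have ht : t ≤ π := by linarith [pi_gt_three]
  set M := t ^ min (a - 3) 2 with hM
  have m1 : t ^ (a - 3) ≤ M := rpow_le_rpow_of_exponent_ge h0 h1 (min_le_left _ _)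
  have m2 : t ^ 2 ≤ M := by
    rw [← rpow_two]; exact rpow_le_rpow_of_exponent_ge h0 h1 (min_le_right _ _)
  have p4 : t * t ^ (a - 4) = t ^ (a - 3) := by
    rw [mul_comm, ← rpow_add_one h0.ne']; congr 1; ring
  have p5 : t ^ 2 * t ^ (a - 5) = t ^ (a - 3) := by
    rw [← rpow_two, ← rpow_add h0]; congr 1; ring
  have hi1 : IntervalIntegrable (fun x => f a x * cos (n * x)) volume 0 t :=
    intervalIntegrable_f_mul ha (by fun_prop) (fun x => abs_cos_le_one _) le_rfl h0.le ht
  have hi2 : IntervalIntegrable (fun x => f a x * cos (n * x)) volume t π :=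
    intervalIntegrable_f_mul ha (by fun_prop) (fun x => abs_cos_le_one _) h0.le ht le_rfl
  rw [← intervalIntegral.integral_add_adjacent_intervals hi1 hi2,
    far_identity ha hnt h0 ht]
  have b1 : |∫ x in (0 : ℝ)..t, f a x * cos (n * x)| ≤ π ^ 4 / (a - 3) * M :=
    (near_bound ha n h0 ht).trans (by gcongr)
  have b2 : |t ^ 2 * (f1 a π * cos (n * π))| ≤ |f1 a π| * M := by
    rw [abs_mul, abs_mul, abs_of_pos (by positivity : 0 < t ^ 2)]
    calc _ ≤ M * (|f1 a π| * 1) := by gcongr; exact abs_cos_le_one _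
      _ = _ := by ring
  have b3 : |t * (f a t * sin 1)| ≤ π ^ 4 * M := by
    rw [abs_mul, abs_mul, abs_of_pos h0]
    calc _ ≤ t * ((π ^ 4 * t ^ (a - 4)) * 1) := by
          gcongr
          · exact f_bound h0 ht
          · exact abs_sin_le_one _
      _ = π ^ 4 * t ^ (a - 3) := by rw [← p4]; ring
      _ ≤ _ := by gcongr
  have b4 : |t ^ 2 * (f1 a t * cos 1)| ≤ π ^ 4 * (a + 4) * M := by
    rw [abs_mul, abs_mul, abs_of_pos (by positivity : 0 < t ^ 2)]
    calc _ ≤ t ^ 2 * ((π ^ 4 * (a + 4) * t ^ (a - 5)) * 1) := by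
          gcongr
          · exact f1_bound ha h0 ht
          · exact abs_cos_le_one _
      _ = π ^ 4 * (a + 4) * t ^ (a - 3) := by rw [← p5]; ring
      _ ≤ _ := by gcongr
  have b5 : |t ^ 2 * ∫ x in t..π, f2 a x * cos (n * x)| ≤
      (π ^ 4 * |a - 4| * (π ^ (a - 5) + 1) +
        π ^ 4 * (4 * a + 21) * (π ^ (a - 3) / (a - 3))) * M := by
    rw [abs_mul, abs_of_pos (by positivity : 0 < t ^ 2)]
    calc _ ≤ t ^ 2 * (π ^ 4 * |a - 4| * (π ^ (a - 5) + t ^ (a - 5)) +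
            π ^ 4 * (4 * a + 21) * (π ^ (a - 3) / (a - 3))) := by
          gcongr; exact f2_integral_bound ha n h0 ht
      _ = π ^ 4 * |a - 4| * (π ^ (a - 5) * t ^ 2 + t ^ (a - 3)) +
            π ^ 4 * (4 * a + 21) * (π ^ (a - 3) / (a - 3)) * t ^ 2 := by rw [← p5]; ring
      _ ≤ π ^ 4 * |a - 4| * (π ^ (a - 5) * M + M) +
            π ^ 4 * (4 * a + 21) * (π ^ (a - 3) / (a - 3)) * M := by gcongr
      _ = _ := by ring
  rw [abs_le] at *
  constructor <;> linarith [b1.1, b1.2, b2.1, b2.2, b3.1, b3.2, b4.1, b4.2, b5.1, b5.2]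

lemma sin_pow_four (θ : ℝ) : sin θ ^ 4 = 3 / 8 - cos (2 * θ) / 2 + cos (4 * θ) / 8 := by
  have h4 : cos (4 * θ) = 2 * cos (2 * θ) ^ 2 - 1 := by
    rw [← cos_two_mul]; ring_nf
  have h2 : cos (2 * θ) = 1 - 2 * sin θ ^ 2 := by
    rw [cos_two_mul, cos_sq']; ring
  rw [h4, h2]; ring

lemma J4_sub_eq {a : ℝ} (ha : 3 < a) (m : ℕ) :
    J4 a m - 3 / 8 * (∫ x in (0 : ℝ)..π, x ^ a / sin (x / 2) ^ 4) =
      1 / 8 * (∫ x in (0 : ℝ)..π, f a x * cos ((2 * m : ℕ) * x)) -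
        1 / 2 * ∫ x in (0 : ℝ)..π, f a x * cos (m * x) := by
  have hi : ∀ n : ℕ, IntervalIntegrable (fun x => f a x * cos (n * x)) volume 0 π := fun n =>
    intervalIntegrable_f_mul ha (by fun_prop) (fun x => abs_cos_le_one _) le_rfl pi_pos.le le_rfl
  have h0 : IntervalIntegrable (f a) volume 0 π := by simpa using hi 0
  have e : J4 a m = ∫ x in (0 : ℝ)..π, (3 / 8 * f a x +
      (1 / 8 * (f a x * cos ((2 * m : ℕ) * x)) - 1 / 2 * (f a x * cos (m * x)))) := by
    unfold J4
    congr 1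
    ext x
    rw [sin_pow_four, f]
    rw [show 2 * ((m : ℝ) * x / 2) = m * x by ring,
      show 4 * ((m : ℝ) * x / 2) = (2 * m : ℕ) * x by push_cast; ring]
    ring
  rw [e, intervalIntegral.integral_add (h0.const_mul _)
      (((hi (2 * m)).const_mul _).sub ((hi m).const_mul _)),
    intervalIntegral.integral_sub ((hi (2 * m)).const_mul _) ((hi m).const_mul _)]
  simp only [intervalIntegral.integral_const_mul, f]
  ring

end OscAux

/-- For `a > 3`, `J₄(a,m) = C''₄₁(a) + O(m^{-min(a-3,2)})` as the integer `m → ∞`,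
where `C''₄₁(a) := (3/8) ∫₀^π x^a/sin⁴(x/2) dx`. -/
theorem stmt_11 (a : ℝ) (ha : 3 < a) :
    (fun m : ℕ => J4 a m - 3 / 8 * (∫ x in (0 : ℝ)..Real.pi, x ^ a / Real.sin (x / 2) ^ 4))
      =O[atTop] fun m : ℕ => (m : ℝ) ^ (-(min (a - 3) 2)) := by
  obtain ⟨C, hC, h⟩ := OscAux.osc_bound ha
  refine IsBigO.of_bound C ?_
  filter_upwards [eventually_ge_atTop 1] with m hm
  have hm0 : (0 : ℝ) < m := by exact_mod_cast hm
  rw [OscAux.J4_sub_eq ha, Real.norm_eq_abs, Real.norm_eq_abs,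
    abs_of_pos (Real.rpow_pos_of_pos hm0 _)]
  have h1 := h m hm
  have h2 : _ ≤ C * (m : ℝ) ^ (-(min (a - 3) 2)) := (h (2 * m) (by omega)).trans <| by
    refine mul_le_mul_of_nonneg_left ?_ hC
    refine Real.rpow_le_rpow_of_nonpos hm0 ?_ ?_
    · push_cast; linarith
    · have : 0 ≤ min (a - 3) 2 := le_min (by linarith) (by norm_num)
      linarith
  rw [abs_le] at *
  constructor <;> linarith [h1.1, h1.2, h2.1, h2.2]
end

section
/- For every a > 3, as m → ∞ one has J₆(a,m) = C''₆₁(a) + O(m^{−min(a−3, 2)}), where C''₆₁(a) := (5/16)·∫₀^π x^a/sin⁴(x/2) dx. -/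
/-!
The identity `sin⁶ θ = 5/16 - 15/32 cos 2θ + 3/16 cos 4θ - 1/32 cos 6θ` reduces the claim to the
bound `∫₀^π f(x) cos(Mx) dx = O(M^{-(q-3)})` for `f(x) = x^a / sin⁴(x/2)` and `q = min a 5`,
applied with `M = m, 2m, 3m`.

For the bound, cut at `ε = π/M`. On `[0, ε]` the size `f(x) ≤ π⁴ x^{a-4}` suffices. On `[ε, π]`
integrate by parts twice: `sin(Mx)` vanishes at both endpoints, so no term of order `1/M` appears,
and what is left is `M⁻²` times `|f'(π)| + |f'(ε)| + ∫_ε^π |f''|`. This bracket is `O(ε^{q-5})`: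
with `t = x cot(x/2) ∈ [0, 2]` one has
`f'' = x^{a-2} sin⁻⁴(x/2) (a(a-1) - 4at + 5t² + x²)`. If `a < 5`, then `|f''| = O(x^{a-6})` is
integrated directly. If `a ≥ 5`, the last factor decreases in `t` and is at least
`(a-4)(a-5) + x² ≥ 0`, so `f` is convex and `∫ |f''| = f'(π) - f'(ε)`; this avoids the
logarithm that the crude bound would produce at `a = 5`.
-/

open MeasureTheory Filter Asymptotics

/-- The weight `x^a / sin⁴(x/2)`. -/
noncomputable def wt (a x : ℝ) : ℝ := x ^ a / Real.sin (x / 2) ^ 4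

/-- The first derivative of `wt a` on `(0, 2π)`. -/
noncomputable def wt1 (a x : ℝ) : ℝ :=
  a * x ^ (a - 1) / Real.sin (x / 2) ^ 4
    - 2 * x ^ a * Real.cos (x / 2) / Real.sin (x / 2) ^ 5

/-- The second derivative of `wt a` on `(0, 2π)`. -/
noncomputable def wt2 (a x : ℝ) : ℝ :=
  a * (a - 1) * x ^ (a - 2) / Real.sin (x / 2) ^ 4
    - 4 * a * x ^ (a - 1) * Real.cos (x / 2) / Real.sin (x / 2) ^ 5
    + x ^ a * (1 / Real.sin (x / 2) ^ 4
      + 5 * Real.cos (x / 2) ^ 2 / Real.sin (x / 2) ^ 6)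

lemma sin_half_pos {x : ℝ} (h0 : 0 < x) (h1 : x ≤ Real.pi) : 0 < Real.sin (x / 2) :=
  Real.sin_pos_of_pos_of_lt_pi (by linarith) (by linarith [Real.pi_pos])

lemma cos_half_nonneg {x : ℝ} (h0 : 0 < x) (h1 : x ≤ Real.pi) : 0 ≤ Real.cos (x / 2) :=
  Real.cos_nonneg_of_neg_pi_div_two_le_of_le (by linarith) (by linarith)

lemma hasDerivAt_sin_half (x : ℝ) :
    HasDerivAt (fun y : ℝ => Real.sin (y / 2)) (Real.cos (x / 2) * (1 / 2)) x :=
  ((hasDerivAt_id x).div_const 2).sin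

lemma hasDerivAt_cos_half (x : ℝ) :
    HasDerivAt (fun y : ℝ => Real.cos (y / 2)) (-Real.sin (x / 2) * (1 / 2)) x :=
  ((hasDerivAt_id x).div_const 2).cos

lemma hasDerivAt_wt (a : ℝ) {x : ℝ} (h0 : 0 < x) (h1 : x ≤ Real.pi) :
    HasDerivAt (wt a) (wt1 a x) x := by
  have hs := sin_half_pos h0 h1
  have h := (Real.hasDerivAt_rpow_const (p := a) (Or.inl h0.ne')).div
    ((hasDerivAt_sin_half x).pow 4) (pow_ne_zero 4 hs.ne')
  refine h.congr_deriv ?_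
  simp only [wt1, Pi.pow_apply]
  field_simp
  norm_num
  ring

lemma hasDerivAt_wt1 (a : ℝ) {x : ℝ} (h0 : 0 < x) (h1 : x ≤ Real.pi) :
    HasDerivAt (wt1 a) (wt2 a x) x := by
  have hs := sin_half_pos h0 h1
  have hA := ((Real.hasDerivAt_rpow_const (p := a - 1) (Or.inl h0.ne')).const_mul a).div
    ((hasDerivAt_sin_half x).pow 4) (pow_ne_zero 4 hs.ne')
  have hB := (((Real.hasDerivAt_rpow_const (p := a) (Or.inl h0.ne')).const_mul 2).mul
    (hasDerivAt_cos_half x)).div ((hasDerivAt_sin_half x).pow 5) (pow_ne_zero 5 hs.ne')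
  refine (hA.sub hB).congr_deriv ?_
  have e : a - 1 - 1 = a - 2 := by ring
  simp only [wt2, Pi.pow_apply, Pi.mul_apply, e]
  field_simp
  norm_num
  ring

lemma rpow_split (a : ℝ) {x : ℝ} (h0 : 0 < x) :
    x ^ (a - 1) = x ^ (a - 2) * x ∧ x ^ a = x ^ (a - 2) * x ^ 2 := by
  constructor
  · rw [← Real.rpow_add_one h0.ne']; ring_nf
  · rw [← Real.rpow_natCast, ← Real.rpow_add h0]; norm_num

/-- `x cot(x/2)`. -/
noncomputable def tt (x : ℝ) : ℝ := x * Real.cos (x / 2) / Real.sin (x / 2)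

lemma wt1_eq (a : ℝ) {x : ℝ} (h0 : 0 < x) (h1 : x ≤ Real.pi) :
    wt1 a x = x ^ (a - 1) / Real.sin (x / 2) ^ 4 * (a - 2 * tt x) := by
  have hs := sin_half_pos h0 h1
  obtain ⟨e1, e2⟩ := rpow_split a h0
  rw [wt1, tt, e1, e2]
  field_simp

lemma wt2_eq (a : ℝ) {x : ℝ} (h0 : 0 < x) (h1 : x ≤ Real.pi) :
    wt2 a x = x ^ (a - 2) / Real.sin (x / 2) ^ 4 *
      (a * (a - 1) - 4 * a * tt x + 5 * tt x ^ 2 + x ^ 2) := by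
  have hs := sin_half_pos h0 h1
  obtain ⟨e1, e2⟩ := rpow_split a h0
  rw [wt2, tt, e1, e2]
  field_simp
  ring

lemma tt_nonneg {x : ℝ} (h0 : 0 < x) (h1 : x ≤ Real.pi) : 0 ≤ tt x :=
  div_nonneg (mul_nonneg h0.le (cos_half_nonneg h0 h1)) (sin_half_pos h0 h1).le

lemma tt_le_two {x : ℝ} (h0 : 0 < x) (h1 : x ≤ Real.pi) : tt x ≤ 2 := by
  have hs := sin_half_pos h0 h1
  rw [tt, div_le_iff₀ hs]
  rcases h1.eq_or_lt with rfl | h1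
  · rw [Real.cos_pi_div_two]; linarith
  · have hc : 0 < Real.cos (x / 2) := Real.cos_pos_of_mem_Ioo ⟨by linarith, by linarith⟩
    have h := Real.le_tan (x := x / 2) (by linarith) (by linarith)
    rw [Real.tan_eq_sin_div_cos, le_div_iff₀ hc] at h
    linarith

/-- Jordan's inequality `x/π ≤ sin(x/2)` bounds the singular factor. -/
lemma rpow_div_sin_le (b : ℝ) {x : ℝ} (h0 : 0 < x) (h1 : x ≤ Real.pi) :
    x ^ b / Real.sin (x / 2) ^ 4 ≤ Real.pi ^ 4 * x ^ (b - 4) := by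
  have hs := sin_half_pos h0 h1
  have hp := Real.pi_pos
  have h := Real.mul_le_sin (x := x / 2) (by linarith) (by linarith)
  have h2 : x / Real.pi ≤ Real.sin (x / 2) := by
    convert h using 1; field_simp
  have h4 : (x / Real.pi) ^ 4 ≤ Real.sin (x / 2) ^ 4 := by gcongr
  have e : x ^ b = x ^ (b - 4) * x ^ 4 := by
    rw [← Real.rpow_natCast, ← Real.rpow_add h0]; norm_num
  rw [div_le_iff₀ (by positivity), e]
  calc x ^ (b - 4) * x ^ 4 = Real.pi ^ 4 * x ^ (b - 4) * (x / Real.pi) ^ 4 := by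
        field_simp
    _ ≤ _ := by gcongr

lemma rpow_div_sin_nonneg (b : ℝ) {x : ℝ} (h0 : 0 < x) :
    0 ≤ x ^ b / Real.sin (x / 2) ^ 4 :=
  div_nonneg (Real.rpow_nonneg h0.le _) (by positivity)

lemma abs_wt1_le {a : ℝ} (ha : 3 < a) {x : ℝ} (h0 : 0 < x) (h1 : x ≤ Real.pi) :
    |wt1 a x| ≤ Real.pi ^ 4 * (a + 4) * x ^ (a - 5) := by
  have h2 := tt_nonneg h0 h1
  have h3 := tt_le_two h0 h1
  have h4 := rpow_div_sin_le (a - 1) h0 h1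
  rw [show a - 1 - 4 = a - 5 by ring] at h4
  rw [wt1_eq a h0 h1, abs_mul, abs_of_nonneg (rpow_div_sin_nonneg _ h0)]
  have h5 : |a - 2 * tt x| ≤ a + 4 := by rw [abs_le]; constructor <;> linarith
  calc _ ≤ Real.pi ^ 4 * x ^ (a - 5) * (a + 4) := by gcongr
    _ = _ := by ring

lemma abs_wt2_le {a : ℝ} (ha : 3 < a) {x : ℝ} (h0 : 0 < x) (h1 : x ≤ Real.pi) :
    |wt2 a x| ≤ Real.pi ^ 4 * (a ^ 2 + 8 * a + 20 + Real.pi ^ 2) * x ^ (a - 6) := by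
  have h2 := tt_nonneg h0 h1
  have h3 := tt_le_two h0 h1
  have h4 := rpow_div_sin_le (a - 2) h0 h1
  rw [show a - 2 - 4 = a - 6 by ring] at h4
  rw [wt2_eq a h0 h1, abs_mul, abs_of_nonneg (rpow_div_sin_nonneg _ h0)]
  have hx : x ^ 2 ≤ Real.pi ^ 2 := by gcongr
  have ht : tt x ^ 2 ≤ 2 ^ 2 := by gcongr
  have hat : a * tt x ≤ a * 2 := by gcongr
  have hat0 : 0 ≤ a * tt x := by positivity
  have h5 : |a * (a - 1) - 4 * a * tt x + 5 * tt x ^ 2 + x ^ 2|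
      ≤ a ^ 2 + 8 * a + 20 + Real.pi ^ 2 := by
    rw [abs_le]; constructor <;> nlinarith
  calc _ ≤ Real.pi ^ 4 * x ^ (a - 6) * (a ^ 2 + 8 * a + 20 + Real.pi ^ 2) := by gcongr
    _ = _ := by ring

/-- The weight is convex on `(0, π]` once `a ≥ 5`. -/
lemma wt2_nonneg {a : ℝ} (ha : 5 ≤ a) {x : ℝ} (h0 : 0 < x) (h1 : x ≤ Real.pi) :
    0 ≤ wt2 a x := by
  have h3 := tt_le_two h0 h1
  rw [wt2_eq a h0 h1]
  refine mul_nonneg (rpow_div_sin_nonneg _ h0) ?_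
  -- the difference from the value at `t = 2` is `(2 - t) (4a - 10 - 5t)`
  have h5 : 0 ≤ (2 - tt x) * (4 * a - 10 - 5 * tt x) :=
    mul_nonneg (by linarith) (by linarith)
  nlinarith [sq_nonneg x, mul_nonneg (sub_nonneg.2 ha) (show 0 ≤ a - 4 by linarith)]

lemma continuousOn_wt2 (a : ℝ) {e : ℝ} (he : 0 < e) :
    ContinuousOn (wt2 a) (Set.Icc e Real.pi) := by
  have hs : ∀ x ∈ Set.Icc e Real.pi, Real.sin (x / 2) ≠ 0 := fun x hx =>
    (sin_half_pos (he.trans_le hx.1) hx.2).ne'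
  have hr : ∀ b : ℝ, ContinuousOn (fun x : ℝ => x ^ b) (Set.Icc e Real.pi) := fun b =>
    continuousOn_id.rpow_const fun x hx => Or.inl (he.trans_le hx.1).ne'
  have hS : ContinuousOn (fun x : ℝ => Real.sin (x / 2)) (Set.Icc e Real.pi) := by fun_prop
  have hC : ContinuousOn (fun x : ℝ => Real.cos (x / 2)) (Set.Icc e Real.pi) := by fun_prop
  have hp : ∀ n : ℕ, ∀ x ∈ Set.Icc e Real.pi, Real.sin (x / 2) ^ n ≠ 0 := fun n x hx =>
    pow_ne_zero n (hs x hx)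
  unfold wt2
  exact (((continuousOn_const.mul (hr _)).div (hS.pow 4) (hp 4)).sub
    (((continuousOn_const.mul (hr _)).mul hC).div (hS.pow 5) (hp 5))).add
    ((hr a).mul ((continuousOn_const.div (hS.pow 4) (hp 4)).add
      ((continuousOn_const.mul (hC.pow 2)).div (hS.pow 6) (hp 6))))

lemma integrable_wt {a : ℝ} (ha : 3 < a) :
    IntervalIntegrable (wt a) volume 0 Real.pi := by
  have h := (intervalIntegral.intervalIntegrable_rpow' (a := 0) (b := Real.pi)
    (r := a - 4) (by linarith)).const_mul (Real.pi ^ 4)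
  refine h.mono_fun' ?_ ?_
  · have : Measurable (wt a) := by unfold wt; fun_prop
    exact this.aestronglyMeasurable
  · filter_upwards [ae_restrict_mem measurableSet_uIoc] with x hx
    rw [Set.uIoc_of_le Real.pi_pos.le] at hx
    rw [Real.norm_eq_abs, wt, abs_of_nonneg (rpow_div_sin_nonneg _ hx.1)]
    exact rpow_div_sin_le a hx.1 hx.2

lemma integrable_wt_cos {a : ℝ} (ha : 3 < a) (M : ℝ) :
    IntervalIntegrable (fun x => wt a x * Real.cos (M * x)) volume 0 Real.pi :=
  (integrable_wt ha).mul_continuousOn (by fun_prop)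

/-- The total variation of `wt1 a` on `[e, π]` is `O(e^{min(a,5)-5})`. -/
lemma integral_abs_wt2_le {a : ℝ} (ha : 3 < a) :
    ∃ K, 0 ≤ K ∧ ∀ e, 0 < e → e ≤ Real.pi →
      (∫ x in e..Real.pi, |wt2 a x|) ≤ K * e ^ (min a 5 - 5) := by
  rcases lt_or_ge a 5 with h5 | h5
  · refine ⟨Real.pi ^ 4 * (a ^ 2 + 8 * a + 20 + Real.pi ^ 2) / (5 - a), ?_, ?_⟩
    · exact div_nonneg (by positivity) (by linarith)
    intro e he hep
    rw [min_eq_left h5.le]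
    have h0 : (0 : ℝ) ∉ Set.uIcc e Real.pi := by
      rw [Set.uIcc_of_le hep]; exact fun h => absurd h.1 (not_le.2 he)
    calc (∫ x in e..Real.pi, |wt2 a x|)
        ≤ ∫ x in e..Real.pi,
            Real.pi ^ 4 * (a ^ 2 + 8 * a + 20 + Real.pi ^ 2) * x ^ (a - 6) := by
          refine intervalIntegral.integral_mono_on hep ?_ ?_ ?_
          · exact ContinuousOn.intervalIntegrable_of_Icc hep (continuousOn_wt2 a he).abs
          · exact (intervalIntegral.intervalIntegrable_rpow (Or.inr h0)).const_mul _
          · exact fun x hx => abs_wt2_le ha (he.trans_le hx.1) hx.2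
      _ = Real.pi ^ 4 * (a ^ 2 + 8 * a + 20 + Real.pi ^ 2)
            * ((e ^ (a - 5) - Real.pi ^ (a - 5)) / (5 - a)) := by
          rw [intervalIntegral.integral_const_mul,
            integral_rpow (Or.inr ⟨by linarith, h0⟩), show a - 6 + 1 = a - 5 by ring,
            ← neg_div_neg_eq, neg_sub, neg_sub]
      _ ≤ Real.pi ^ 4 * (a ^ 2 + 8 * a + 20 + Real.pi ^ 2)
            * (e ^ (a - 5) / (5 - a)) := by
          have : 0 < 5 - a := by linarith
          have : 0 ≤ Real.pi ^ (a - 5) := by positivity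
          gcongr
          linarith
      _ = _ := by ring
  · refine ⟨2 * (Real.pi ^ 4 * (a + 4) * Real.pi ^ (a - 5)), by positivity, ?_⟩
    intro e he hep
    rw [min_eq_right h5, sub_self, Real.rpow_zero, mul_one]
    have hb : ∀ x, 0 < x → x ≤ Real.pi →
        |wt1 a x| ≤ Real.pi ^ 4 * (a + 4) * Real.pi ^ (a - 5) := fun x h0 h1 =>
      (abs_wt1_le ha h0 h1).trans (by gcongr)
    have hI : (∫ x in e..Real.pi, |wt2 a x|) = ∫ x in e..Real.pi, wt2 a x := by
      refine intervalIntegral.integral_congr fun x hx => ?_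
      rw [Set.uIcc_of_le hep] at hx
      exact abs_of_nonneg (wt2_nonneg h5 (he.trans_le hx.1) hx.2)
    rw [hI, intervalIntegral.integral_eq_sub_of_hasDerivAt (f := wt1 a)]
    · have h1 := (abs_le.1 (hb Real.pi Real.pi_pos le_rfl)).2
      have h2 := (abs_le.1 (hb e he hep)).1
      linarith
    · intro x hx
      rw [Set.uIcc_of_le hep] at hx
      exact hasDerivAt_wt1 a (he.trans_le hx.1) hx.2
    · exact ContinuousOn.intervalIntegrable_of_Icc hep (continuousOn_wt2 a he)

lemma rpow_le_rpow_min (a c : ℝ) {x : ℝ} (h0 : 0 < x) (h1 : x ≤ Real.pi) :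
    x ^ (a - c) ≤ Real.pi ^ (a - min a 5) * x ^ (min a 5 - c) := by
  have e : x ^ (a - c) = x ^ (a - min a 5) * x ^ (min a 5 - c) := by
    rw [← Real.rpow_add h0]; ring_nf
  rw [e]
  gcongr
  linarith [min_le_left a 5]

/-- Two integrations by parts on `[π/M, π]`. -/
lemma integral_wt_cos_tail (a : ℝ) {M : ℕ} (hM : 1 ≤ M) :
    |∫ x in (Real.pi / M)..Real.pi, wt a x * Real.cos (M * x)| ≤
      (|wt1 a Real.pi| + |wt1 a (Real.pi / M)|
        + ∫ x in (Real.pi / M)..Real.pi, |wt2 a x|) / (M : ℝ) ^ 2 := by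
  have hM1 : (1 : ℝ) ≤ M := by exact_mod_cast hM
  have hM0 : (0 : ℝ) < M := by linarith
  set e := Real.pi / M with he_def
  have he : 0 < e := by positivity
  have hep : e ≤ Real.pi := div_le_self Real.pi_pos.le hM1
  have hMe : (M : ℝ) * e = Real.pi := by rw [he_def]; field_simp
  have hw : ContinuousOn (wt a) (Set.Icc e Real.pi) := fun x hx =>
    (hasDerivAt_wt a (he.trans_le hx.1) hx.2).continuousAt.continuousWithinAt
  have hi0 : IntervalIntegrable (fun x => wt a x * Real.cos (M * x)) volume e Real.pi :=
    ContinuousOn.intervalIntegrable_of_Icc hep (hw.mul (by fun_prop))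
  have hi2 : IntervalIntegrable (fun x => wt2 a x * Real.cos (M * x)) volume e Real.pi :=
    ContinuousOn.intervalIntegrable_of_Icc hep ((continuousOn_wt2 a he).mul (by fun_prop))
  have hF : ∀ x ∈ Set.uIcc e Real.pi, HasDerivAt
      (fun x => wt a x * Real.sin (M * x) / M + wt1 a x * Real.cos (M * x) / (M : ℝ) ^ 2)
      (wt a x * Real.cos (M * x) + wt2 a x * Real.cos (M * x) / (M : ℝ) ^ 2) x := by
    intro x hx
    rw [Set.uIcc_of_le hep] at hx
    have h0 := hasDerivAt_wt a (he.trans_le hx.1) hx.2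
    have h1 := hasDerivAt_wt1 a (he.trans_le hx.1) hx.2
    have hl : HasDerivAt (fun y : ℝ => (M : ℝ) * y) (M * 1) x := (hasDerivAt_id x).const_mul _
    refine (((h0.mul hl.sin).div_const _).add ((h1.mul hl.cos).div_const _)).congr_deriv ?_
    field_simp
    ring
  have hftc := intervalIntegral.integral_eq_sub_of_hasDerivAt hF
    (hi0.add (hi2.div_const _))
  rw [intervalIntegral.integral_add hi0 (hi2.div_const _), intervalIntegral.integral_div,
    hMe, Real.sin_pi, Real.sin_nat_mul_pi] at hftc
  have hb : |∫ x in e..Real.pi, wt2 a x * Real.cos (M * x)| ≤ ∫ x in e..Real.pi, |wt2 a x| := by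
    refine (intervalIntegral.abs_integral_le_integral_abs hep).trans ?_
    refine intervalIntegral.integral_mono_on hep hi2.abs
      (ContinuousOn.intervalIntegrable_of_Icc hep (continuousOn_wt2 a he).abs) fun x _ => ?_
    rw [abs_mul]
    exact mul_le_of_le_one_right (abs_nonneg _) (Real.abs_cos_le_one _)
  have hc1 : |wt1 a Real.pi * Real.cos (M * Real.pi)| ≤ |wt1 a Real.pi| := by
    rw [abs_mul]
    exact mul_le_of_le_one_right (abs_nonneg _) (Real.abs_cos_le_one _)
  have key : (∫ x in e..Real.pi, wt a x * Real.cos (M * x)) =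
      (wt1 a Real.pi * Real.cos (M * Real.pi) + wt1 a e
        - ∫ x in e..Real.pi, wt2 a x * Real.cos (M * x)) / (M : ℝ) ^ 2 := by
    rw [Real.cos_pi] at hftc
    rw [eq_sub_of_add_eq hftc]
    ring
  rw [key, abs_div, abs_of_pos (show (0 : ℝ) < (M : ℝ) ^ 2 by positivity)]
  gcongr
  refine (abs_sub _ _).trans ?_
  gcongr
  exact (abs_add_le _ _).trans (by gcongr)

lemma integral_wt_cos_head {a : ℝ} (ha : 3 < a) (M : ℝ) {e : ℝ} (he : 0 < e)
    (hep : e ≤ Real.pi) :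
    |∫ x in (0 : ℝ)..e, wt a x * Real.cos (M * x)| ≤ Real.pi ^ 4 * (e ^ (a - 3) / (a - 3)) := by
  have hle : ∀ x ∈ Set.Ioc 0 e,
      ‖wt a x * Real.cos (M * x)‖ ≤ Real.pi ^ 4 * x ^ (a - 4) := by
    intro x hx
    have h1 := hx.2.trans hep
    rw [Real.norm_eq_abs, abs_mul]
    refine (mul_le_of_le_one_right (abs_nonneg _) (Real.abs_cos_le_one _)).trans ?_
    rw [wt, abs_of_nonneg (rpow_div_sin_nonneg _ hx.1)]
    exact rpow_div_sin_le a hx.1 h1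
  have h := intervalIntegral.norm_integral_le_of_norm_le he.le
    (Filter.Eventually.of_forall hle)
    ((intervalIntegral.intervalIntegrable_rpow' (a := 0) (b := e) (r := a - 4)
      (by linarith)).const_mul (Real.pi ^ 4))
  rw [intervalIntegral.integral_const_mul, integral_rpow (Or.inl (by linarith)),
    show a - 4 + 1 = a - 3 by ring, Real.zero_rpow (by linarith), sub_zero] at h
  exact h

/-- The Fourier cosine coefficients of the weight decay like `M^{-(min(a,5)-3)}`. -/
lemma integral_wt_cos_le {a : ℝ} (ha : 3 < a) :
    ∃ K, 0 ≤ K ∧ ∀ M : ℕ, 1 ≤ M →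
      |∫ x in (0 : ℝ)..Real.pi, wt a x * Real.cos (M * x)| ≤ K * (M : ℝ) ^ (-(min (a - 3) 2)) := by
  obtain ⟨K₂, hK₂, hV⟩ := integral_abs_wt2_le ha
  have ha3 : 0 < a - 3 := by linarith
  set P := Real.pi ^ (a - min a 5) with hP
  set K₁ := Real.pi ^ 4 * (a + 4) * P with hK₁
  set A := Real.pi ^ 4 * (P / (a - 3)) + (|wt1 a Real.pi| * Real.pi ^ (5 - min a 5) + K₁ + K₂)
    / Real.pi ^ 2 with hA
  refine ⟨A * Real.pi ^ (min a 5 - 3), by positivity, fun M hM => ?_⟩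
  have hM1 : (1 : ℝ) ≤ M := by exact_mod_cast hM
  have hM0 : (0 : ℝ) < M := by linarith
  have htail := integral_wt_cos_tail a hM
  set e := Real.pi / M with he_def
  have he : 0 < e := by positivity
  have hep : e ≤ Real.pi := div_le_self Real.pi_pos.le hM1
  have hmem : e ∈ Set.uIcc 0 Real.pi := by
    rw [Set.uIcc_of_le Real.pi_pos.le]; exact ⟨he.le, hep⟩
  have hi := integrable_wt_cos ha (M : ℝ)
  rw [← intervalIntegral.integral_add_adjacent_intervals
    (hi.mono_set (Set.uIcc_subset_uIcc_left hmem))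
    (hi.mono_set (Set.uIcc_subset_uIcc_right hmem))]
  have hhead := integral_wt_cos_head ha M he hep
  have hw1 : |wt1 a e| ≤ K₁ * e ^ (min a 5 - 5) := by
    refine (abs_wt1_le ha he hep).trans ?_
    rw [hK₁, mul_assoc _ P]
    gcongr
    exact rpow_le_rpow_min a 5 he hep
  -- `e^(min a 5 - 5)` is bounded below, since its exponent is nonpositive
  have hone : 1 ≤ Real.pi ^ (5 - min a 5) * e ^ (min a 5 - 5) := by
    rw [show min a 5 - 5 = -(5 - min a 5) by ring, Real.rpow_neg he.le, ← div_eq_mul_inv,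
      one_le_div (by positivity)]
    exact Real.rpow_le_rpow he.le hep (by linarith [min_le_right a 5])
  have hM2 : (M : ℝ) = Real.pi / e := by rw [he_def]; field_simp
  have he5 : e ^ (min a 5 - 5) * e ^ 2 = e ^ (min a 5 - 3) := by
    rw [← Real.rpow_natCast, ← Real.rpow_add he]; congr 1; push_cast; ring
  calc _ ≤ Real.pi ^ 4 * (e ^ (a - 3) / (a - 3)) + _ :=
        (abs_add_le _ _).trans (add_le_add hhead htail)
    _ ≤ Real.pi ^ 4 * (P * e ^ (min a 5 - 3) / (a - 3))
        + (|wt1 a Real.pi| * (Real.pi ^ (5 - min a 5) * e ^ (min a 5 - 5))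
          + K₁ * e ^ (min a 5 - 5) + K₂ * e ^ (min a 5 - 5)) / (M : ℝ) ^ 2 := by
        gcongr
        · exact rpow_le_rpow_min a 3 he hep
        · exact le_mul_of_one_le_right (abs_nonneg _) hone
        · exact hV e he hep
    _ = A * e ^ (min a 5 - 3) := by
        rw [hM2, hA, ← he5]
        field_simp
    _ = A * Real.pi ^ (min a 5 - 3) * (M : ℝ) ^ (-(min (a - 3) 2)) := by
        have : min (a - 3) 2 = min a 5 - 3 := by rw [← min_sub_sub_right]; norm_num
        rw [this, he_def, Real.div_rpow Real.pi_pos.le hM0.le, Real.rpow_neg hM0.le]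
        ring

lemma sin_pow_six (t : ℝ) : Real.sin (t / 2) ^ 6 =
    5 / 16 - 15 / 32 * Real.cos t + 3 / 16 * Real.cos (2 * t) - 1 / 32 * Real.cos (3 * t) := by
  have h : Real.sin (t / 2) ^ 2 = (1 - Real.cos t) / 2 := by
    rw [Real.sin_sq_eq_half_sub, mul_div_cancel₀ t two_ne_zero]; ring
  rw [Real.cos_two_mul, Real.cos_three_mul, show Real.sin (t / 2) ^ 6 = (Real.sin (t / 2) ^ 2) ^ 3
    by ring, h]
  ring

lemma J6_sub_eq {a : ℝ} (ha : 3 < a) (m : ℕ) :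
    J6 a m - 5 / 16 * (∫ x in (0 : ℝ)..Real.pi, x ^ a / Real.sin (x / 2) ^ 4) =
      -(15 / 32) * (∫ x in (0 : ℝ)..Real.pi, wt a x * Real.cos ((m : ℕ) * x))
      + 3 / 16 * (∫ x in (0 : ℝ)..Real.pi, wt a x * Real.cos ((2 * m : ℕ) * x))
      - 1 / 32 * (∫ x in (0 : ℝ)..Real.pi, wt a x * Real.cos ((3 * m : ℕ) * x)) := by
  have h0 := (integrable_wt ha).const_mul (5 / 16)
  have h1 := (integrable_wt_cos ha (m : ℕ)).const_mul (15 / 32)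
  have h2 := (integrable_wt_cos ha (2 * m : ℕ)).const_mul (3 / 16)
  have h3 := (integrable_wt_cos ha (3 * m : ℕ)).const_mul (1 / 32)
  have e : J6 a m = ∫ x in (0 : ℝ)..Real.pi, (5 / 16 * wt a x
      - 15 / 32 * (wt a x * Real.cos ((m : ℕ) * x))
      + 3 / 16 * (wt a x * Real.cos ((2 * m : ℕ) * x)))
      - 1 / 32 * (wt a x * Real.cos ((3 * m : ℕ) * x)) := by
    refine intervalIntegral.integral_congr fun x _ => ?_
    simp only [wt]
    rw [sin_pow_six]
    push_cast
    rw [mul_assoc, mul_assoc]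
    ring
  rw [e, intervalIntegral.integral_sub ((h0.sub h1).add h2) h3,
    intervalIntegral.integral_add (h0.sub h1) h2, intervalIntegral.integral_sub h0 h1]
  simp only [intervalIntegral.integral_const_mul]
  unfold wt
  ring

/-- For `a > 3`, `J₆(a,m) = C''₆₁(a) + O(m^{-min(a-3,2)})` as the integer `m → ∞`,
where `C''₆₁(a) := (5/16) ∫₀^π x^a/sin⁴(x/2) dx`. -/
theorem stmt_12 (a : ℝ) (ha : 3 < a) :
    (fun m : ℕ => J6 a m - 5 / 16 * (∫ x in (0 : ℝ)..Real.pi, x ^ a / Real.sin (x / 2) ^ 4))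
      =O[atTop] fun m : ℕ => (m : ℝ) ^ (-(min (a - 3) 2)) := by
  obtain ⟨K, hK, hb⟩ := integral_wt_cos_le ha
  refine IsBigO.of_bound (15 / 32 * K + 3 / 16 * K + 1 / 32 * K) ?_
  filter_upwards [eventually_ge_atTop 1] with m hm
  have hm0 : (0 : ℝ) < m := by exact_mod_cast hm
  have hp : -(min (a - 3) 2) ≤ 0 := neg_nonpos.2 (le_min (by linarith) (by norm_num))
  have hk : ∀ k : ℕ, m ≤ k →
      |∫ x in (0 : ℝ)..Real.pi, wt a x * Real.cos (k * x)| ≤ K * (m : ℝ) ^ (-(min (a - 3) 2)) :=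
    fun k hmk => (hb k (hm.trans hmk)).trans (mul_le_mul_of_nonneg_left
      (Real.rpow_le_rpow_of_nonpos hm0 (by exact_mod_cast hmk) hp) hK)
  rw [J6_sub_eq ha, Real.norm_eq_abs, Real.norm_eq_abs,
    abs_of_nonneg (Real.rpow_nonneg hm0.le _)]
  have h1 := abs_le.1 (hk m le_rfl)
  have h2 := abs_le.1 (hk (2 * m) (by omega))
  have h3 := abs_le.1 (hk (3 * m) (by omega))
  rw [abs_le]
  constructor <;> linarith [h1.1, h1.2, h2.1, h2.2, h3.1, h3.2]
end

section
/- The function y ↦ 1/sin⁴(y) − 1/y⁴ − (2/3)·1/y² tends to 11/45 as y → 0 (y ≠ 0). -/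
open Filter

/-!
Taylor's formula gives `sin y = y - y³/6 + r y⁵` with `r → 1/120` as `y → 0`. With `t = y²` and
`w = -1/6 + r t` this reads `sin y = y (1 + t w)`. Over the common denominator `t² (1 + t w)⁴`, the
numerator `1 - (1 + 2t/3) (1 + t w)⁴` is `t²` times a polynomial in `t`, `r` and `w`, so the limit is
obtained by evaluating a continuous expression at `t = 0`, `w = -1/6`, `r = 1/120`.
-/

/-- The coefficient of `y⁵` in the Taylor expansion of `sin`, as a limit. -/
lemma tendsto_sin_remainder :
    Tendsto (fun y : ℝ => (Real.sin y - y + y ^ 3 / 6) / y ^ 5)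
      (nhdsWithin 0 {(0 : ℝ)}ᶜ) (nhds (1 / 120)) := by
  have h := taylor_isLittleO_univ (x₀ := 0) (n := 5) (Real.contDiff_sin (n := 5))
  have h' := (h.mono (nhdsWithin_le_nhds (s := {(0 : ℝ)}ᶜ))).tendsto_div_nhds_zero
  have h2 := h'.add_const (1 / 120)
  rw [zero_add] at h2
  refine h2.congr' ?_
  filter_upwards [self_mem_nhdsWithin] with y hy
  have hy : y ≠ 0 := hy
  simp [taylorWithinEval_succ, iteratedDerivWithin_univ, iteratedDeriv_succ, Nat.factorial]
  field_simp
  ring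

/-- `1/sin⁴ y - 1/y⁴ - (2/3)/y² → 11/45` as `y → 0`, `y ≠ 0`. -/
theorem stmt_18 :
    Tendsto (fun y : ℝ => 1 / Real.sin y ^ 4 - 1 / y ^ 4 - 2 / 3 * (1 / y ^ 2))
      (nhdsWithin 0 {(0 : ℝ)}ᶜ) (nhds (11 / 45)) := by
  have hr := tendsto_sin_remainder
  set r : ℝ → ℝ := fun y => (Real.sin y - y + y ^ 3 / 6) / y ^ 5 with hrdef
  have ht : Tendsto (fun y : ℝ => y ^ 2) (nhdsWithin 0 {(0 : ℝ)}ᶜ) (nhds 0) := by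
    have : Tendsto (fun y : ℝ => y ^ 2) (nhds 0) (nhds (0 ^ 2)) := (continuous_pow 2).tendsto 0
    rw [zero_pow two_ne_zero] at this
    exact this.mono_left nhdsWithin_le_nhds
  have hw : Tendsto (fun y => -1 / 6 + r y * y ^ 2) (nhdsWithin 0 {(0 : ℝ)}ᶜ) (nhds (-1 / 6)) := by
    simpa using (hr.mul ht).const_add (-1 / 6)
  have hA : Tendsto (fun y => 1 + y ^ 2 * (-1 / 6 + r y * y ^ 2))
      (nhdsWithin 0 {(0 : ℝ)}ᶜ) (nhds 1) := by
    simpa using (ht.mul hw).const_add 1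
  have key := ((((hr.const_mul 4).add (hw.const_mul (8 / 3))).add
    (((ht.const_mul (2 / 3)).const_add 1).mul ((((hw.pow 2).const_mul 6).add
      ((ht.mul (hw.pow 3)).const_mul 4)).add ((ht.pow 2).mul (hw.pow 4))))).neg).div
    (hA.pow 4) (by norm_num)
  have hval : (11 / 45 : ℝ) = -(4 * (1 / 120) + 8 / 3 * (-1 / 6) + (1 + 2 / 3 * 0) *
      (6 * (-1 / 6) ^ 2 + 4 * (0 * (-1 / 6) ^ 3) + 0 ^ 2 * (-1 / 6) ^ 4)) / 1 ^ 4 := by norm_num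
  rw [hval]
  refine key.congr' ?_
  filter_upwards [self_mem_nhdsWithin, hA.eventually_ne one_ne_zero] with y hy hAy
  have hy : y ≠ 0 := hy
  have hs : Real.sin y = y * (1 + y ^ 2 * (-1 / 6 + r y * y ^ 2)) := by
    simp only [hrdef]
    field_simp
    ring
  rw [hs, Pi.div_apply]
  -- What remains is an identity of rational functions in `y` and `ρ = r y`.
  generalize r y = ρ at hAy ⊢
  generalize hB : 1 + y ^ 2 * (-1 / 6 + ρ * y ^ 2) = B at hAy ⊢
  have hcd : 1 / (y * B) ^ 4 - 1 / y ^ 4 - 2 / 3 * (1 / y ^ 2)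
      = (1 - (1 + 2 / 3 * y ^ 2) * B ^ 4) / y ^ 4 / B ^ 4 := by
    field_simp
    ring
  rw [hcd]
  congr 1
  rw [eq_div_iff (pow_ne_zero 4 hy), ← hB]
  ring
end

section
/- The function y ↦ (1/y⁵ + (1/3)·1/y³ − cos(y)/sin⁵(y)) / y tends to 31/945 as y → 0 (y ≠ 0); equivalently, 1/y⁵ + (1/3)·1/y³ − cos(y)/sin⁵(y) ∼ (31/945)·y as y → 0. -/
/-! Since `exp (i y)` agrees with its Taylor polynomial of degree 7 up to `O(y ^ 8)`, taking real
and imaginary parts gives `cos y = 1 - y²/2 + y⁴/24 - y⁶/720 + y⁶ c` and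
`sin y = y (u + y⁶ t)` with `u = 1 - y²/6 + y⁴/120`, where `c → 0` and `t → -1/5040` as `y → 0`.
Putting the expression over a common denominator turns it into
`((u + y⁶ t)⁵ (1 + y²/3) - cos y) / (y⁶ (u + y⁶ t)⁵)`. The coefficients of `1`, `y²`, `y⁴` in the
numerator vanish, so `y⁶` cancels and what remains is a polynomial in `y, c, t` divided by
`(u + y⁶ t)⁵`, which tends to `1`. -/

open Filter

/-- The degree-7 Taylor polynomial of `exp (i y)`, with real and imaginary parts bounded
separately. -/
lemma sin_cos_bound (y : ℝ) (hy : |y| ≤ 1) :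
    |Real.cos y - (1 - y ^ 2 / 2 + y ^ 4 / 24 - y ^ 6 / 720)| ≤ |y| ^ 8 ∧
    |Real.sin y - (y - y ^ 3 / 6 + y ^ 5 / 120 - y ^ 7 / 5040)| ≤ |y| ^ 8 := by
  have hn : ‖(y : ℂ) * Complex.I‖ = |y| := by simp
  have h := Complex.exp_bound (x := (y : ℂ) * Complex.I) (by rw [hn]; exact hy)
    (n := 8) (by norm_num)
  rw [hn] at h
  have h8 : |y| ^ 8 * (((Nat.succ 8 : ℕ) : ℝ) * (((Nat.factorial 8 : ℕ) : ℝ) * ((8 : ℕ) : ℝ))⁻¹)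
      ≤ |y| ^ 8 := by
    apply mul_le_of_le_one_right (by positivity)
    norm_num [Nat.factorial]
  replace h := h.trans h8
  have I2 : Complex.I ^ 2 = -1 := Complex.I_sq
  have I3 : Complex.I ^ 3 = -Complex.I := by rw [pow_succ, I2]; ring
  have I4 : Complex.I ^ 4 = 1 := Complex.I_pow_four
  have I5 : Complex.I ^ 5 = Complex.I := by rw [pow_succ, I4]; ring
  have I6 : Complex.I ^ 6 = -1 := by rw [pow_succ, I5, ← I2]; ring
  have I7 : Complex.I ^ 7 = -Complex.I := by rw [pow_succ, I6]; ring
  have e : Complex.exp ((y : ℂ) * Complex.I) -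
        ∑ m ∈ Finset.range 8, ((y : ℂ) * Complex.I) ^ m / (Nat.factorial m : ℂ) =
      ((Real.cos y - (1 - y ^ 2 / 2 + y ^ 4 / 24 - y ^ 6 / 720) : ℝ) : ℂ) +
      ((Real.sin y - (y - y ^ 3 / 6 + y ^ 5 / 120 - y ^ 7 / 5040) : ℝ) : ℂ) * Complex.I := by
    rw [Complex.exp_mul_I]
    simp only [Finset.sum_range_succ, Finset.sum_range_zero, mul_pow, I2, I3, I4, I5, I6, I7]
    norm_num [Nat.factorial]
    ring
  rw [e] at h
  constructor
  · refine le_trans ?_ ((Complex.abs_re_le_norm _).trans h)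
    simp only [Complex.add_re, Complex.add_im, Complex.re_ofReal_mul, Complex.im_ofReal_mul,
      Complex.ofReal_re, Complex.ofReal_im, Complex.I_re, Complex.I_im, mul_zero, mul_one,
      add_zero, zero_add, le_refl]
  · refine le_trans ?_ ((Complex.abs_im_le_norm _).trans h)
    simp only [Complex.add_re, Complex.add_im, Complex.re_ofReal_mul, Complex.im_ofReal_mul,
      Complex.ofReal_re, Complex.ofReal_im, Complex.I_re, Complex.I_im, mul_zero, mul_one,
      add_zero, zero_add, le_refl]

/-- If `f y = O(y ^ 8)` then `f y / y ^ k → 0` for `k ≤ 7`. -/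
lemma tendsto_div_pow_of_bound (f : ℝ → ℝ) (hf : ∀ y, |y| ≤ 1 → |f y| ≤ |y| ^ 8) (k : ℕ)
    (hk : k ≤ 7) : Tendsto (fun y => f y / y ^ k) (nhdsWithin 0 {(0 : ℝ)}ᶜ) (nhds 0) := by
  have h0 : Tendsto (fun y : ℝ => |y|) (nhdsWithin 0 {(0 : ℝ)}ᶜ) (nhds 0) := by
    have : Tendsto (fun y : ℝ => |y|) (nhds 0) (nhds |0|) := continuous_abs.tendsto 0
    rw [abs_zero] at this
    exact this.mono_left nhdsWithin_le_nhds
  apply squeeze_zero_norm' _ h0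
  filter_upwards [self_mem_nhdsWithin, h0.eventually (ge_mem_nhds one_pos)] with y hy hy1
  have hp : 0 < |y| := abs_pos.mpr hy
  rw [Real.norm_eq_abs, abs_div, abs_pow, div_le_iff₀ (by positivity), ← pow_succ']
  exact (hf y hy1).trans (pow_le_pow_of_le_one hp.le hy1 (by omega))

/-- `(1/y⁵ + (1/3)/y³ - cos y/sin⁵ y)/y → 31/945` as `y → 0`, `y ≠ 0`; equivalently
`1/y⁵ + (1/3)/y³ - cos y/sin⁵ y ∼ (31/945) y` as `y → 0`. -/
theorem stmt_19 :
    Tendsto (fun y : ℝ => (1 / y ^ 5 + 1 / 3 * (1 / y ^ 3) - Real.cos y / Real.sin y ^ 5) / y)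
      (nhdsWithin 0 {(0 : ℝ)}ᶜ) (nhds (31 / 945)) := by
  have hc := tendsto_div_pow_of_bound _ (fun y hy => (sin_cos_bound y hy).1) 6 (by norm_num)
  have hs := tendsto_div_pow_of_bound _ (fun y hy => (sin_cos_bound y hy).2) 7 (by norm_num)
  have hy0 : Tendsto (fun y : ℝ => y) (nhdsWithin 0 {(0 : ℝ)}ᶜ) (nhds 0) :=
    tendsto_id.mono_left nhdsWithin_le_nhds
  -- The value at `(y, c, s)` of the expression after cancelling `y ^ 6`, with `t = s - 1 / 5040`;
  -- `Q = (u ^ 5 * (1 + y ^ 2 / 3) - (1 - y ^ 2 / 2 + y ^ 4 / 24)) / y ^ 6` is expanded.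
  let u : ℝ → ℝ := fun y => 1 - y ^ 2 / 6 + y ^ 4 / 120
  let Q : ℝ → ℝ := fun y =>
    (7/216) + (-19/1440) * y ^ 2 + (67/25920) * y ^ 4 + (-1493/4665600) * y ^ 6 + (5/186624) * y ^ 8 + (-571/373248000) * y ^ 10 + (43/746496000) * y ^ 12 + (-97/74649600000) * y ^ 14 + (1/74649600000) * y ^ 16
  let R : ℝ × ℝ → ℝ := fun p =>
    5 * u p.1 ^ 4 * p.2 + 10 * u p.1 ^ 3 * p.2 ^ 2 * p.1 ^ 6 + 10 * u p.1 ^ 2 * p.2 ^ 3 * p.1 ^ 12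
      + 5 * u p.1 * p.2 ^ 4 * p.1 ^ 18 + p.2 ^ 5 * p.1 ^ 24
  let G : ℝ × ℝ × ℝ → ℝ := fun p =>
    (Q p.1 + R (p.1, p.2.2 - 1 / 5040) * (1 + p.1 ^ 2 / 3) + 1 / 720 - p.2.1)
      / (u p.1 + p.1 ^ 6 * (p.2.2 - 1 / 5040)) ^ 5
  have hG : ContinuousAt G (0, 0, 0) := by
    apply ContinuousAt.div
    · simp only [Q, R, u]; fun_prop
    · simp only [u]; fun_prop
    · norm_num [u]
  have hG0 : G (0, 0, 0) = 31 / 945 := by norm_num [G, Q, R, u]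
  have key := hG.tendsto.comp (hy0.prodMk_nhds (hc.prodMk_nhds hs))
  rw [hG0] at key
  refine key.congr' ?_
  have hpi : ∀ᶠ y : ℝ in nhdsWithin 0 {(0 : ℝ)}ᶜ, |y| < Real.pi := by
    apply nhdsWithin_le_nhds
    apply continuous_abs.continuousAt.eventually_lt_const
    simpa using Real.pi_pos
  filter_upwards [self_mem_nhdsWithin, hpi] with y hy hyp
  have hy' : y ≠ 0 := hy
  have hsin : Real.sin y ≠ 0 := by
    intro h
    obtain ⟨h1, h2⟩ := abs_lt.mp hyp
    exact hy' ((Real.sin_eq_zero_iff_of_lt_of_lt h1 h2).mp h)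
  simp only [Function.comp]
  set c := (Real.cos y - (1 - y ^ 2 / 2 + y ^ 4 / 24 - y ^ 6 / 720)) / y ^ 6 with hcd
  set s := (Real.sin y - (y - y ^ 3 / 6 + y ^ 5 / 120 - y ^ 7 / 5040)) / y ^ 7 with hsd
  have ec : Real.cos y = 1 - y ^ 2 / 2 + y ^ 4 / 24 - y ^ 6 / 720 + y ^ 6 * c := by
    rw [hcd]; field_simp; ring
  obtain ⟨t, ht⟩ : ∃ t, t = s - 1 / 5040 := ⟨_, rfl⟩
  have es : Real.sin y = y * (u y + y ^ 6 * t) := by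
    rw [ht, hsd]; simp only [u]; field_simp; ring
  obtain ⟨S, hS⟩ : ∃ S, S = u y + y ^ 6 * t := ⟨_, rfl⟩
  have hS0 : S ≠ 0 := by
    rintro rfl
    rw [es, ← hS, mul_zero] at hsin
    exact hsin rfl
  have hnum : y ^ 6 * (Q y + R (y, t) * (1 + y ^ 2 / 3) + 1 / 720 - c) =
      S ^ 5 * (1 + y ^ 2 / 3) - Real.cos y := by
    rw [ec, hS]; simp only [Q, R, u]; ring
  have hGe : G (y, c, s) = (y ^ 6 * (Q y + R (y, t) * (1 + y ^ 2 / 3) + 1 / 720 - c))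
      / (y ^ 6 * S ^ 5) := by
    rw [mul_div_mul_left _ _ (pow_ne_zero 6 hy')]
    simp only [G, ← ht, ← hS]
  rw [hGe, hnum, es, ← hS]
  field_simp
end
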